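/- arXiv:2305.13270 — 4 statements merged into one kernel-verified Lean document; each statement's English description precedes it below -/
import Mathlib

section
/- Let E be a finite dimensional Banach space. Then K_G(E, E*) = K_G(E, E) = ρ(E, E). -/
/-!
Writing `ν` for `projNorm` and `tr` for the trace, everything rests on trace duality between the
projective norm and the operator norm: for `u : X → F` with `X` finite dimensional,
`ν u = max {tr (B ∘ u) : B : F → X, ‖B‖ ≤ 1}`. The inequality `≥` (`trace_comp_le_projNorm`) is read
off from any representation of `u` as a sum of rank-one maps; the existence of a maximizing `B`
(`exists_projNorm_le_trace`) is Hahn-Banach for the sublinear functional `ν`.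

By duality and cyclicity of the trace, all three constants equal
`sup {tr (u ∘ A) : A : E → E*, u : E* → E, ‖A‖ ≤ 1, ‖u‖ ≤ 1}`: in `tr (B ∘ u ∘ Aᵀ)` two consecutive
maps can be merged into a single contraction. In the proof this appears as mutual domination of the
sets defining the suprema, which makes a separate proof of their boundedness unnecessary.
-/

open scoped BigOperators

/-- The projective tensor norm of the element of `X* ⊗ F` corresponding (via the canonical
identification, `X` finite dimensional) to the continuous linear map `u : X → F`. -/
noncomputable def projNorm {X F : Type*} [NormedAddCommGroup X] [NormedSpace ℝ X]
    [NormedAddCommGroup F] [NormedSpace ℝ F] (u : X →L[ℝ] F) : ℝ :=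
  sInf { r : ℝ | ∃ (k : ℕ) (η : Fin k → (X →L[ℝ] ℝ)) (f : Fin k → F),
    (∀ x, u x = ∑ i, η i x • f i) ∧ r = ∑ i, ‖η i‖ * ‖f i‖ }

/-- The Grothendieck constant `K_G(E,F)`.  An element of `E ⊗ F` is encoded as a map
`u : E* → F`, an element of `E* ⊗ F` as a map `E → F`, and `A ⊗ id_F` sends `u` to
`u ∘ Aᵀ`, where `Aᵀ = A.flip : E → E*`. -/
noncomputable def KG (E F : Type*) [NormedAddCommGroup E] [NormedSpace ℝ E]
    [NormedAddCommGroup F] [NormedSpace ℝ F] : ℝ :=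
  sSup { r : ℝ | ∃ (A : E →L[ℝ] (E →L[ℝ] ℝ)) (u : (E →L[ℝ] ℝ) →L[ℝ] F),
    ‖A‖ ≤ 1 ∧ ‖u‖ ≤ 1 ∧ r = projNorm (u.comp A.flip) }

/-- `ρ(E,F)`: the norm of the identity from `E ⊗̌ F` to `E ⊗̂ F`. -/
noncomputable def rho (E F : Type*) [NormedAddCommGroup E] [NormedSpace ℝ E]
    [NormedAddCommGroup F] [NormedSpace ℝ F] : ℝ :=
  sSup { r : ℝ | ∃ u : (E →L[ℝ] ℝ) →L[ℝ] F, ‖u‖ ≤ 1 ∧ r = projNorm u }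

/-- `A : E → E*` is non-negative: the corresponding tensor in `E* ⊗ E*` is a (finite) sum of
symmetric tensors `η ⊗ η`, i.e. lies in the convex hull of such tensors. -/
def IsNonnegMap {E : Type*} [NormedAddCommGroup E] [NormedSpace ℝ E]
    (A : E →L[ℝ] (E →L[ℝ] ℝ)) : Prop :=
  ∃ (k : ℕ) (η : Fin k → (E →L[ℝ] ℝ)), ∀ x, A x = ∑ i, η i x • η i

/-- A tensor `z ∈ E ⊗ E` (encoded as a map `E* → E`) is non-negative if it is a finite sum of
symmetric tensors `e ⊗ e`. -/
def IsNonnegTensor {E : Type*} [NormedAddCommGroup E] [NormedSpace ℝ E]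
    (z : (E →L[ℝ] ℝ) →L[ℝ] E) : Prop :=
  ∃ (k : ℕ) (e : Fin k → E), ∀ φ, z φ = ∑ i, φ (e i) • e i

/-- The positive Grothendieck constant `K_G⁺(E,F)`. -/
noncomputable def KGpos (E F : Type*) [NormedAddCommGroup E] [NormedSpace ℝ E]
    [NormedAddCommGroup F] [NormedSpace ℝ F] : ℝ :=
  sSup { r : ℝ | ∃ (A : E →L[ℝ] (E →L[ℝ] ℝ)) (u : (E →L[ℝ] ℝ) →L[ℝ] F),
    IsNonnegMap A ∧ ‖A‖ ≤ 1 ∧ ‖u‖ ≤ 1 ∧ r = projNorm (u.comp A.flip) }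

/-- The factorization constant `f(X,E)` of `X` through `E`. -/
noncomputable def factConst (X E : Type*) [NormedAddCommGroup X] [NormedSpace ℝ X]
    [NormedAddCommGroup E] [NormedSpace ℝ E] : ℝ :=
  sInf { r : ℝ | ∃ (u : X →L[ℝ] E) (v : E →L[ℝ] X),
    v.comp u = ContinuousLinearMap.id ℝ X ∧ r = ‖u‖ * ‖v‖ }

/-- `γ(E) = sup { tr(BA) : A ≥ 0, B ≥ 0, ‖A‖ ≤ 1, ‖B‖ ≤ 1 }`. -/
noncomputable def gammaConst (E : Type*) [NormedAddCommGroup E] [NormedSpace ℝ E] : ℝ :=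
  sSup { r : ℝ | ∃ (A : E →L[ℝ] (E →L[ℝ] ℝ)) (B : (E →L[ℝ] ℝ) →L[ℝ] E),
    IsNonnegMap A ∧ IsNonnegTensor B ∧ ‖A‖ ≤ 1 ∧ ‖B‖ ≤ 1 ∧
    r = LinearMap.trace ℝ E ((B.comp A : E →L[ℝ] E) : E →ₗ[ℝ] E) }

/-- `ρ⁺(E)`: as `ρ(E,E)` but the supremum is restricted to non-negative tensors. -/
noncomputable def rhoPlus (E : Type*) [NormedAddCommGroup E] [NormedSpace ℝ E] : ℝ :=
  sSup { r : ℝ | ∃ z : (E →L[ℝ] ℝ) →L[ℝ] E,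
    IsNonnegTensor z ∧ ‖z‖ ≤ 1 ∧ r = projNorm z }

/-- `X` has (Rademacher) cotype `q`. -/
def HasCotype (X : Type*) [NormedAddCommGroup X] [NormedSpace ℝ X] (q : ℝ) : Prop :=
  ∃ C > 0, ∀ (n : ℕ) (x : Fin n → X),
    (∑ i, ‖x i‖ ^ q) ^ (1/q) ≤
      C * (((2 : ℝ) ^ n)⁻¹ *
        ∑ ε : Fin n → Bool, ‖∑ i, (if ε i then (1:ℝ) else -1) • x i‖ ^ 2) ^ (1/2 : ℝ)

section TraceDuality

variable {X F : Type*} [NormedAddCommGroup X] [NormedSpace ℝ X]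
  [NormedAddCommGroup F] [NormedSpace ℝ F]

lemma projNorm_bddBelow (u : X →L[ℝ] F) :
    BddBelow { r : ℝ | ∃ (k : ℕ) (η : Fin k → (X →L[ℝ] ℝ)) (f : Fin k → F),
      (∀ x, u x = ∑ i, η i x • f i) ∧ r = ∑ i, ‖η i‖ * ‖f i‖ } := by
  refine ⟨0, ?_⟩
  rintro r ⟨k, η, f, -, rfl⟩
  positivity

lemma projNorm_nonneg (u : X →L[ℝ] F) : 0 ≤ projNorm u := by
  refine Real.sInf_nonneg ?_
  rintro r ⟨k, η, f, -, rfl⟩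
  positivity

lemma projNorm_le {u : X →L[ℝ] F} {k : ℕ} (η : Fin k → (X →L[ℝ] ℝ)) (f : Fin k → F)
    (h : ∀ x, u x = ∑ i, η i x • f i) : projNorm u ≤ ∑ i, ‖η i‖ * ‖f i‖ :=
  csInf_le (projNorm_bddBelow u) ⟨k, η, f, h, rfl⟩

/-- The coordinate functionals of a fixed basis of a finite dimensional space, with the basis:
this writes the identity of `X` as a sum of rank-one maps. -/
lemma exists_coord (X : Type*) [NormedAddCommGroup X] [NormedSpace ℝ X] [FiniteDimensional ℝ X] :
    ∃ (k : ℕ) (η : Fin k → (X →L[ℝ] ℝ)) (b : Fin k → X), ∀ x, ∑ i, η i x • b i = x := by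
  let b := Module.finBasis ℝ X
  exact ⟨_, fun i => LinearMap.toContinuousLinearMap (b.coord i), b, fun x => by
    simp [b.sum_repr x]⟩

/-- The set of costs is nonempty when `X` is finite dimensional, so a lower bound for the cost of
all representations is a lower bound for the projective norm. -/
lemma le_projNorm [FiniteDimensional ℝ X] {u : X →L[ℝ] F} {c : ℝ}
    (h : ∀ (k : ℕ) (η : Fin k → (X →L[ℝ] ℝ)) (f : Fin k → F),
      (∀ x, u x = ∑ i, η i x • f i) → c ≤ ∑ i, ‖η i‖ * ‖f i‖) : c ≤ projNorm u := by
  refine le_csInf ?_ ?_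
  · obtain ⟨k, η, b, hb⟩ := exists_coord X
    refine ⟨_, k, η, fun i => u (b i), fun x => ?_, rfl⟩
    conv_lhs => rw [← hb x]
    simp
  · rintro r ⟨k, η, f, hu, rfl⟩
    exact h k η f hu

lemma projNorm_add_le [FiniteDimensional ℝ X] (u v : X →L[ℝ] F) :
    projNorm (u + v) ≤ projNorm u + projNorm v := by
  rw [← sub_le_iff_le_add]
  refine le_projNorm fun k η f hu => ?_
  rw [sub_le_comm]
  refine le_projNorm fun l θ g hv => ?_
  rw [sub_le_iff_le_add']
  refine (projNorm_le (Fin.append η θ) (Fin.append f g) fun x => ?_).trans_eq ?_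
  · simp [Fin.sum_univ_add, hu, hv]
  · simp [Fin.sum_univ_add]

lemma projNorm_smul_le [FiniteDimensional ℝ X] {c : ℝ} (hc : 0 < c) (u : X →L[ℝ] F) :
    projNorm (c • u) ≤ c * projNorm u := by
  rw [← div_le_iff₀' hc]
  refine le_projNorm fun k η f hu => ?_
  rw [div_le_iff₀' hc]
  refine (projNorm_le η (fun i => c • f i) fun x => ?_).trans_eq ?_
  · simp [hu, Finset.smul_sum, smul_comm c]
  · simp only [norm_smul, Real.norm_eq_abs, abs_of_pos hc, Finset.mul_sum]
    exact Finset.sum_congr rfl fun i _ => by ring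

lemma projNorm_smul [FiniteDimensional ℝ X] {c : ℝ} (hc : 0 < c) (u : X →L[ℝ] F) :
    projNorm (c • u) = c * projNorm u := by
  refine (projNorm_smul_le hc u).antisymm ?_
  have h := projNorm_smul_le (inv_pos.2 hc) (c • u)
  rwa [inv_smul_smul₀ hc.ne', ← div_eq_inv_mul, le_div_iff₀' hc] at h

lemma trace_comp_eq_sum [FiniteDimensional ℝ X] {k : ℕ} (η : Fin k → (X →L[ℝ] ℝ))
    (f : Fin k → F) {u : X →L[ℝ] F} (h : ∀ x, u x = ∑ i, η i x • f i) (B : F →L[ℝ] X) :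
    LinearMap.trace ℝ X ((B : F →ₗ[ℝ] X) ∘ₗ (u : X →ₗ[ℝ] F)) = ∑ i, η i (B (f i)) := by
  have : (B : F →ₗ[ℝ] X) ∘ₗ (u : X →ₗ[ℝ] F)
      = ∑ i, (η i : X →ₗ[ℝ] ℝ).smulRight (B (f i)) := by
    ext x
    simp [h]
  simp [this, LinearMap.trace_smulRight]

/-- The easy half of trace duality. -/
lemma trace_comp_le_projNorm [FiniteDimensional ℝ X] (u : X →L[ℝ] F) (B : F →L[ℝ] X)
    (hB : ‖B‖ ≤ 1) :
    LinearMap.trace ℝ X ((B : F →ₗ[ℝ] X) ∘ₗ (u : X →ₗ[ℝ] F)) ≤ projNorm u := by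
  refine le_projNorm fun k η f h => ?_
  rw [trace_comp_eq_sum η f h]
  refine Finset.sum_le_sum fun i _ => (le_abs_self _).trans ?_
  exact (η i).le_opNorm_of_le (B.le_of_opNorm_le_of_le hB le_rfl |>.trans_eq (one_mul _))

/-- The Hahn-Banach half of trace duality. A norming functional `φ` of `u` for the projective norm
satisfies `|φ (η ⊗ f)| ≤ ‖η‖ ‖f‖` on rank-one maps, so it is given by a contraction `B : F → X`
through `η (B f) = φ (η ⊗ f)`, and then `φ u = tr (B ∘ u)`. -/
lemma exists_projNorm_le_trace [FiniteDimensional ℝ X] [FiniteDimensional ℝ F]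
    (u : X →L[ℝ] F) : ∃ B : F →L[ℝ] X, ‖B‖ ≤ 1 ∧
      projNorm u ≤ LinearMap.trace ℝ X ((B : F →ₗ[ℝ] X) ∘ₗ (u : X →ₗ[ℝ] F)) := by
  obtain ⟨φ, hφu, hφ⟩ : ∃ φ : (X →L[ℝ] F) →ₗ[ℝ] ℝ, φ u = projNorm u ∧
      ∀ v, φ v ≤ projNorm v := by
    rcases eq_or_ne u 0 with rfl | hu
    · refine ⟨0, ?_, fun v => by simpa using projNorm_nonneg v⟩
      refine le_antisymm (by simpa using projNorm_nonneg _) ?_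
      simpa using projNorm_le (u := (0 : X →L[ℝ] F)) (k := 0) Fin.elim0 Fin.elim0 (by simp)
    · obtain ⟨φ, h1, h2⟩ := exists_extension_of_le_sublinear
        (LinearPMap.mkSpanSingleton (K := ℝ) u (projNorm u) hu) projNorm
        (fun c hc v => projNorm_smul hc v) projNorm_add_le (by
          rintro ⟨x, hx⟩
          obtain ⟨c, rfl⟩ := Submodule.mem_span_singleton.1 hx
          refine (LinearPMap.mkSpanSingleton'_apply _ _ _ c hx).trans_le ?_
          rcases lt_or_ge 0 c with hc | hc
          · exact (projNorm_smul hc u).ge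
          · exact (mul_nonpos_of_nonpos_of_nonneg hc (projNorm_nonneg u)).trans
              (projNorm_nonneg _))
      refine ⟨φ, ?_, h2⟩
      rw [h1 ⟨u, Submodule.mem_span_singleton_self u⟩]
      exact LinearPMap.mkSpanSingleton_apply ℝ ℝ hu (projNorm u)
  obtain ⟨k, η, b, hb⟩ := exists_coord X
  let B₀ : F →ₗ[ℝ] X :=
    ∑ i, (φ ∘ₗ (ContinuousLinearMap.smulRightL ℝ X F (η i) : F →ₗ[ℝ] X →L[ℝ] F)).smulRight (b i)
  have hB₀ : ∀ (θ : X →L[ℝ] ℝ) f, θ (B₀ f) = φ (θ.smulRight f) := by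
    intro θ f
    have : θ.smulRight f = ∑ i, θ (b i) • (η i).smulRight f := by
      ext x
      conv_lhs => rw [← hb x]
      simp [smul_smul, mul_comm]
    simp [this, B₀, mul_comm]
  refine ⟨LinearMap.toContinuousLinearMap B₀, ?_, ?_⟩
  · refine ContinuousLinearMap.opNorm_le_bound _ zero_le_one fun f => ?_
    obtain ⟨θ, hθ, hθf⟩ := exists_dual_vector'' ℝ (B₀ f)
    have h1 : projNorm (θ.smulRight f) ≤ ‖θ‖ * ‖f‖ := by
      simpa using projNorm_le (u := θ.smulRight f) (k := 1) (fun _ => θ) (fun _ => f) (by simp)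
    have h2 := (hφ (θ.smulRight f)).trans h1
    rw [← hB₀, hθf] at h2
    exact h2.trans (mul_le_mul_of_nonneg_right hθ (norm_nonneg f))
  · have hu : ∀ x, u x = ∑ i, η i x • u (b i) := fun x => by
      conv_lhs => rw [← hb x]
      simp
    rw [trace_comp_eq_sum η _ hu, ← hφu]
    have hu' : u = ∑ i, (η i).smulRight (u (b i)) := by
      ext x
      simp [hu x]
    conv_lhs => rw [hu']
    simp [hB₀]

end TraceDuality

/-- For a finite dimensional Banach space `E`, `K_G(E,E*) = K_G(E,E) = ρ(E,E)`. -/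
theorem statement8 (E : Type*)
    [NormedAddCommGroup E] [NormedSpace ℝ E] [FiniteDimensional ℝ E] :
    KG E (E →L[ℝ] ℝ) = KG E E ∧ KG E E = rho E E := by
  have key1 : KG E (E →L[ℝ] ℝ) = rho E E := by
    apply csSup_eq_csSup_of_forall_exists_le
    · rintro _ ⟨A, u, hA, hu, rfl⟩
      obtain ⟨B, hB, h⟩ := exists_projNorm_le_trace (u.comp A.flip)
      refine ⟨_, ⟨B, hB, rfl⟩, h.trans ?_⟩
      rw [LinearMap.trace_comp_comm']
      refine trace_comp_le_projNorm _ _ ((u.opNorm_comp_le _).trans ?_)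
      rw [ContinuousLinearMap.opNorm_flip]
      exact mul_le_one₀ hu (ContinuousLinearMap.opNorm_nonneg _) hA
    · rintro _ ⟨u, hu, rfl⟩
      obtain ⟨A, hA, h⟩ := exists_projNorm_le_trace u
      refine ⟨_, ⟨A.flip, .id ℝ _, ?_, ContinuousLinearMap.norm_id_le, rfl⟩, h.trans ?_⟩
      · rwa [ContinuousLinearMap.opNorm_flip]
      · rw [LinearMap.trace_comp_comm']
        simpa using trace_comp_le_projNorm A u hu
  have key2 : KG E E = rho E E := by
    apply csSup_eq_csSup_of_forall_exists_le
    · rintro _ ⟨A, u, hA, hu, rfl⟩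
      obtain ⟨B, hB, h⟩ := exists_projNorm_le_trace (u.comp A.flip)
      refine ⟨_, ⟨B.comp u, (B.opNorm_comp_le u).trans (mul_le_one₀ hB (norm_nonneg _) hu), rfl⟩,
        h.trans ?_⟩
      rw [ContinuousLinearMap.toLinearMap_comp, ← LinearMap.comp_assoc,
        LinearMap.trace_comp_comm']
      refine trace_comp_le_projNorm (B.comp u) A.flip ?_
      rwa [ContinuousLinearMap.opNorm_flip]
    · rintro _ ⟨u, hu, rfl⟩
      obtain ⟨A, hA, h⟩ := exists_projNorm_le_trace u
      refine ⟨_, ⟨A.flip, u, ?_, hu, rfl⟩, h.trans ?_⟩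
      · rwa [ContinuousLinearMap.opNorm_flip]
      · rw [LinearMap.trace_comp_comm', ContinuousLinearMap.flip_flip]
        exact trace_comp_le_projNorm (u.comp A) (.id ℝ E) ContinuousLinearMap.norm_id_le
  exact ⟨key1.trans key2.symm, key2⟩
end

section
/- For every n ≥ 1, K_G(ℓ_2^n, ℓ_2^n) = ρ(ℓ_2^n, ℓ_2^n) = n. -/
/-!
Every linear map `u` with values in `ℓ₂ⁿ` whose domain is isometric to `ℓ₂ⁿ` is the sum of `n`
elementary tensors obtained by expanding along an orthonormal basis, each of norm at most `‖u‖`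
(`exists_repr_of_norm_le_one`), so its projective norm is at most `n` when `‖u‖ ≤ 1`.  Conversely,
trace duality bounds the projective norm of `u` below by `tr (u ∘ T)` for any contraction `T`
(`trace_comp_le_projNorm`).  For an isometric isomorphism `u` and `T = u⁻¹` this trace is `n`.
Both suprema are thus at most `n`, and both are attained at the Riesz isomorphism: for `ρ` the
tensor is the inverse Riesz map, and for `K_G` it is composed with the Riesz map itself, which
gives the identity of `ℓ₂ⁿ`.
-/

open scoped BigOperators

section

variable {n : ℕ} {X : Type*} [NormedAddCommGroup X] [NormedSpace ℝ X]

theorem exists_repr_of_norm_le_one (J : EuclideanSpace ℝ (Fin n) ≃ₗᵢ[ℝ] X)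
    (u : X →L[ℝ] EuclideanSpace ℝ (Fin n)) (hu : ‖u‖ ≤ 1) :
    ∃ (η : Fin n → (X →L[ℝ] ℝ)) (f : Fin n → EuclideanSpace ℝ (Fin n)),
      (∀ x, u x = ∑ i, η i x • f i) ∧ ∑ i, ‖η i‖ * ‖f i‖ ≤ n := by
  let b := EuclideanSpace.basisFun (Fin n) ℝ
  refine ⟨fun i => (innerSL ℝ (b i)).comp (J.symm.toContinuousLinearEquiv : X →L[ℝ] _),
    fun i => u (J (b i)), fun x => ?_, ?_⟩
  · have h := congrArg (fun y => u (J y)) (b.sum_repr' (J.symm x))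
    simp only [map_sum, map_smul, LinearIsometryEquiv.apply_symm_apply] at h
    exact h.symm
  · have hterm : ∀ i, ‖(innerSL ℝ (b i)).comp
        (J.symm.toContinuousLinearEquiv : X →L[ℝ] _)‖ * ‖u (J (b i))‖ ≤ 1 := by
      intro i
      have h1 : ‖(innerSL ℝ (b i)).comp
          (J.symm.toContinuousLinearEquiv : X →L[ℝ] _)‖ ≤ 1 := by
        refine ContinuousLinearMap.opNorm_le_bound _ zero_le_one fun x => ?_
        have h := norm_inner_le_norm (𝕜 := ℝ) (b i) (J.symm x)
        rw [b.norm_eq_one, J.symm.norm_map] at h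
        exact h
      have h2 : ‖u (J (b i))‖ ≤ 1 := by
        have h := u.le_of_opNorm_le hu (J (b i))
        rwa [J.norm_map, b.norm_eq_one, one_mul] at h
      exact mul_le_one₀ h1 (norm_nonneg _) h2
    exact (Finset.sum_le_sum fun i _ => hterm i).trans (by simp)

theorem projNorm_le_of_norm_le_one (J : EuclideanSpace ℝ (Fin n) ≃ₗᵢ[ℝ] X)
    (u : X →L[ℝ] EuclideanSpace ℝ (Fin n)) (hu : ‖u‖ ≤ 1) : projNorm u ≤ n := by
  obtain ⟨η, f, h, hle⟩ := exists_repr_of_norm_le_one J u hu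
  refine le_trans (csInf_le ?_ ⟨n, η, f, h, rfl⟩) hle
  refine ⟨0, ?_⟩
  rintro r ⟨k, η, f, -, rfl⟩
  positivity

/-- Trace duality between the projective norm and the operator norm.  The representation `h₀`
guarantees that the infimum defining `projNorm u` is over a nonempty set. -/
theorem trace_comp_le_projNorm_s10 {F : Type*} [NormedAddCommGroup F] [NormedSpace ℝ F]
    [FiniteDimensional ℝ F] (u : X →L[ℝ] F) (T : F →L[ℝ] X) (hT : ‖T‖ ≤ 1)
    (h₀ : ∃ (k : ℕ) (η : Fin k → (X →L[ℝ] ℝ)) (f : Fin k → F), ∀ x, u x = ∑ i, η i x • f i) :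
    LinearMap.trace ℝ F (u.comp T : F →L[ℝ] F) ≤ projNorm u := by
  obtain ⟨k₀, η₀, f₀, h₀⟩ := h₀
  refine le_csInf ⟨_, k₀, η₀, f₀, h₀, rfl⟩ ?_
  rintro r ⟨k, η, f, h, rfl⟩
  have hsum : ((u.comp T : F →L[ℝ] F) : F →ₗ[ℝ] F) =
      ∑ i, (((η i).comp T : F →L[ℝ] ℝ) : F →ₗ[ℝ] ℝ).smulRight (f i) := by
    ext x
    simp [h]
  rw [hsum, map_sum]
  refine Finset.sum_le_sum fun i _ => ?_
  rw [LinearMap.trace_smulRight]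
  calc η i (T (f i)) ≤ ‖η i (T (f i))‖ := le_abs_self _
    _ ≤ ‖η i‖ * ‖T (f i)‖ := (η i).le_opNorm _
    _ ≤ ‖η i‖ * ‖f i‖ := by
      gcongr
      simpa using T.le_of_opNorm_le hT (f i)

theorem LinearIsometryEquiv.norm_coe_le_one {Y Z : Type*} [NormedAddCommGroup Y]
    [NormedSpace ℝ Y] [NormedAddCommGroup Z] [NormedSpace ℝ Z] (J : Y ≃ₗᵢ[ℝ] Z) :
    ‖(J.toContinuousLinearEquiv : Y →L[ℝ] Z)‖ ≤ 1 :=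
  ContinuousLinearMap.opNorm_le_bound _ zero_le_one fun x => by simp

theorem projNorm_symm (J : EuclideanSpace ℝ (Fin n) ≃ₗᵢ[ℝ] X) :
    projNorm (J.symm.toContinuousLinearEquiv : X →L[ℝ] EuclideanSpace ℝ (Fin n)) = n := by
  have hJ := J.symm.norm_coe_le_one
  refine le_antisymm (projNorm_le_of_norm_le_one J _ hJ) ?_
  obtain ⟨η, f, h, -⟩ := exists_repr_of_norm_le_one J
    (J.symm.toContinuousLinearEquiv : X →L[ℝ] EuclideanSpace ℝ (Fin n)) hJ
  have key := trace_comp_le_projNorm_s10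
    (J.symm.toContinuousLinearEquiv : X →L[ℝ] EuclideanSpace ℝ (Fin n))
    (J.toContinuousLinearEquiv : EuclideanSpace ℝ (Fin n) →L[ℝ] X) J.norm_coe_le_one
    ⟨n, η, f, h⟩
  have hid : (((J.symm.toContinuousLinearEquiv : X →L[ℝ] EuclideanSpace ℝ (Fin n)).comp
      (J.toContinuousLinearEquiv : EuclideanSpace ℝ (Fin n) →L[ℝ] X) :
      EuclideanSpace ℝ (Fin n) →L[ℝ] EuclideanSpace ℝ (Fin n)) :
      EuclideanSpace ℝ (Fin n) →ₗ[ℝ] EuclideanSpace ℝ (Fin n)) = LinearMap.id := by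
    ext1 x
    exact J.symm_apply_apply x
  rw [hid, LinearMap.trace_id, finrank_euclideanSpace_fin] at key
  exact key

end

/-- The Riesz isomorphism of `ℓ₂ⁿ` with its dual, as a linear isometry: Mathlib's
`InnerProductSpace.toDual` is conjugate-linear, and conjugation on `ℝ` is the identity. -/
noncomputable def riesz (n : ℕ) :
    EuclideanSpace ℝ (Fin n) ≃ₗᵢ[ℝ] (EuclideanSpace ℝ (Fin n) →L[ℝ] ℝ) :=
  InnerProductSpace.toDual ℝ (EuclideanSpace ℝ (Fin n))

theorem rho_euclideanSpace (n : ℕ) :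
    rho (EuclideanSpace ℝ (Fin n)) (EuclideanSpace ℝ (Fin n)) = n := by
  refine IsGreatest.csSup_eq ⟨⟨_, (riesz n).symm.norm_coe_le_one,
    (projNorm_symm (riesz n)).symm⟩, ?_⟩
  rintro r ⟨u, hu, rfl⟩
  exact projNorm_le_of_norm_le_one (riesz n) u hu

theorem KG_euclideanSpace (n : ℕ) :
    KG (EuclideanSpace ℝ (Fin n)) (EuclideanSpace ℝ (Fin n)) = n := by
  refine IsGreatest.csSup_eq ⟨⟨_, _, (riesz n).norm_coe_le_one,
    (riesz n).symm.norm_coe_le_one, ?_⟩, ?_⟩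
  · rw [← projNorm_symm (LinearIsometryEquiv.refl ℝ (EuclideanSpace ℝ (Fin n)))]
    congr 1
    ext1 x
    -- The inner product is symmetric, so the Riesz map is its own transpose.
    have hflip : ((riesz n).toContinuousLinearEquiv :
        EuclideanSpace ℝ (Fin n) →L[ℝ] (EuclideanSpace ℝ (Fin n) →L[ℝ] ℝ)).flip x =
        riesz n x := by
      ext1 y
      exact real_inner_comm x y
    exact ((congrArg (riesz n).symm hflip).trans ((riesz n).symm_apply_apply x)).symm
  · rintro r ⟨A, u, hA, hu, rfl⟩
    refine projNorm_le_of_norm_le_one (LinearIsometryEquiv.refl ℝ _) _ ?_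
    refine (u.opNorm_comp_le A.flip).trans (mul_le_one₀ hu (norm_nonneg _) ?_)
    rwa [ContinuousLinearMap.opNorm_flip]

/-- `K_G(ℓ₂ⁿ, ℓ₂ⁿ) = ρ(ℓ₂ⁿ, ℓ₂ⁿ) = n`. -/
theorem statement10 (n : ℕ) (hn : 1 ≤ n) :
    KG (EuclideanSpace ℝ (Fin n)) (EuclideanSpace ℝ (Fin n)) =
      rho (EuclideanSpace ℝ (Fin n)) (EuclideanSpace ℝ (Fin n)) ∧
    rho (EuclideanSpace ℝ (Fin n)) (EuclideanSpace ℝ (Fin n)) = n := by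
  exact ⟨(KG_euclideanSpace n).trans (rho_euclideanSpace n).symm, rho_euclideanSpace n⟩
end

section
/- If n ≥ 2 and F is a Banach space with dim F ≥ 2, then K_G(ℓ_∞^n, F) ≥ √2. -/
/-!
Take `A = ½ [[1, 1], [1, -1]]` on the first two coordinates of `ℓ_∞ⁿ`; it has norm at most `1`
as a map `ℓ_∞ⁿ → ℓ_1ⁿ`, because `|s + t| + |s - t| ≤ 2 max(|s|, |t|)`. A map `u : ℓ_1ⁿ → F`
with `u e₀ = f`, `u e₁ = g` and `u eᵢ = 0` otherwise has norm at most `1` when `f`, `g` lie in the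
unit ball, and since the projective norm on `ℓ_1ⁿ ⊗ F` is the norm of `ℓ_1ⁿ(F)`, the tensor
`(A ⊗ id) u` has projective norm at least `½ (‖f + g‖ + ‖f - g‖)` (`le_projNorm`).

It remains to find `f`, `g` in the unit ball with `‖f + g‖ + ‖f - g‖ ≥ 2√2`
(`exists_james_pair`). By the intermediate value theorem on a half turn of the unit sphere of a
plane in `F`, there are unit vectors with `‖x + y‖ = ‖x - y‖ = a`. If `a ≥ √2`, take `(x, y)`;
otherwise take `((x + y) / a, (x - y) / a)`, whose sum and difference have norm `2 / a ≥ √2`.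

The supremum defining `KG` is one of real numbers, so it must also be shown to be over a bounded
set; the expansion of a map in the coordinate functionals gives a bound (`projNorm_le`).
-/

open scoped BigOperators

open scoped ENNReal

section James

variable {F : Type*} [NormedAddCommGroup F] [NormedSpace ℝ F]

/-- A space of dimension at least two contains two isosceles orthogonal unit vectors. -/
lemma exists_isosceles (hF : 2 ≤ Module.rank ℝ F) :
    ∃ x y : F, ‖x‖ = 1 ∧ ‖y‖ = 1 ∧ ‖x + y‖ = ‖x - y‖ := by
  obtain ⟨v, hv⟩ : ∃ v : Fin 2 → F, LinearIndependent ℝ v := by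
    exact Module.le_rank_iff.1 (by exact_mod_cast hF)
  have hv0 : v 0 ≠ 0 := hv.ne_zero 0
  set x : F := ‖v 0‖⁻¹ • v 0 with hx
  have hx1 : ‖x‖ = 1 := norm_smul_inv_norm (𝕜 := ℝ) hv0
  -- the half turn from `x` to `-x` through the direction of `v 1`
  set c : ℝ → F := fun t => Real.cos t • x + Real.sin t • v 1 with hc
  have hc0 : ∀ t, c t ≠ 0 := by
    intro t ht
    have h := LinearIndependent.pair_iff.1 (show LinearIndependent ℝ ![v 0, v 1] by
      convert hv using 1; ext i; fin_cases i <;> rfl) (Real.cos t * ‖v 0‖⁻¹) (Real.sin t)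
      (by simpa [hc, hx, smul_smul] using ht)
    have h1 : Real.cos t = 0 := by
      rcases mul_eq_zero.1 h.1 with h | h
      · exact h
      · simp [hv0] at h
    have := Real.sin_sq_add_cos_sq t
    rw [h1, h.2] at this
    norm_num at this
  have hcc : Continuous c := by fun_prop
  set y : ℝ → F := fun t => ‖c t‖⁻¹ • c t with hy
  have hyc : Continuous y :=
    (hcc.norm.inv₀ fun t => norm_ne_zero_iff.2 (hc0 t)).smul hcc
  have hg : ContinuousOn (fun t => ‖x + y t‖ - ‖x - y t‖) (Set.Icc 0 Real.pi) := by
    fun_prop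
  have hy0 : y 0 = x := by simp [hy, hc, hx1]
  have hyp : y Real.pi = -x := by simp [hy, hc, hx1]
  have h0 : (0 : ℝ) ∈ Set.Icc (‖x + y Real.pi‖ - ‖x - y Real.pi‖) (‖x + y 0‖ - ‖x - y 0‖) := by
    rw [hy0, hyp]
    simp
  obtain ⟨t, -, ht⟩ := intermediate_value_Icc' Real.pi_pos.le hg h0
  exact ⟨x, y t, hx1, norm_smul_inv_norm (𝕜 := ℝ) (hc0 t), sub_eq_zero.1 ht⟩

/-- In dimension at least two the James constant is at least `√2`. -/
lemma exists_james_pair (hF : 2 ≤ Module.rank ℝ F) :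
    ∃ f g : F, ‖f‖ ≤ 1 ∧ ‖g‖ ≤ 1 ∧ 2 * √2 ≤ ‖f + g‖ + ‖f - g‖ := by
  obtain ⟨x, y, hx, hy, hxy⟩ := exists_isosceles hF
  rcases le_total (√2) ‖x + y‖ with h | h
  · exact ⟨x, y, hx.le, hy.le, by linarith⟩
  have ha : 0 < ‖x + y‖ := by
    have h1 : ‖(x + y) + (x - y)‖ ≤ ‖x + y‖ + ‖x - y‖ := norm_add_le _ _
    have h2 : (x + y) + (x - y) = (2 : ℝ) • x := by rw [two_smul]; abel
    rw [h2, norm_smul, hx, ← hxy] at h1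
    norm_num at h1
    linarith
  set a := ‖x + y‖ with hadef
  have e1 : a⁻¹ • (x + y) + a⁻¹ • (x - y) = (2 * a⁻¹) • x := by module
  have e2 : a⁻¹ • (x + y) - a⁻¹ • (x - y) = (2 * a⁻¹) • y := by module
  refine ⟨a⁻¹ • (x + y), a⁻¹ • (x - y), ?_, ?_, ?_⟩
  · rw [norm_smul, ← hadef, Real.norm_of_nonneg (by positivity), inv_mul_cancel₀ ha.ne']
  · rw [norm_smul, ← hxy, Real.norm_of_nonneg (by positivity), inv_mul_cancel₀ ha.ne']
  · rw [e1, e2, norm_smul, norm_smul, hx, hy, Real.norm_of_nonneg (by positivity)]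
    have : √2 ≤ 2 * a⁻¹ := by
      rw [← div_eq_mul_inv, le_div_iff₀ ha]
      nlinarith [Real.mul_self_sqrt (show (0 : ℝ) ≤ 2 by norm_num), Real.sqrt_nonneg 2]
    linarith

end James

section Tensor

variable {F : Type*} [NormedAddCommGroup F] [NormedSpace ℝ F] {n : ℕ}

/-- The `i`-th unit vector of `ℓ_∞ⁿ`. -/
noncomputable def unitVec (i : Fin n) : PiLp ⊤ fun _ : Fin n => ℝ :=
  WithLp.toLp ⊤ (Pi.single i 1)

lemma unitVec_apply (i j : Fin n) : unitVec i j = if j = i then 1 else 0 := by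
  simp [unitVec]

lemma norm_comb_unitVec_le {a b : Fin n} (hab : a ≠ b) {s t : ℝ} (hs : |s| ≤ 1) (ht : |t| ≤ 1) :
    ‖s • unitVec a + t • unitVec b‖ ≤ 1 := by
  rw [PiLp.norm_eq_ciSup]
  refine Real.iSup_le (fun i => ?_) zero_le_one
  rcases eq_or_ne i a with rfl | hi
  · simpa [unitVec_apply, hab] using hs
  · rcases eq_or_ne i b with rfl | hj
    · simpa [unitVec_apply, hi] using ht
    · simp [unitVec_apply, hi, hj]

/-- A functional on `ℓ_∞ⁿ` has norm at least the `ℓ_1` norm of any two of its coefficients. -/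
lemma abs_add_abs_le {a b : Fin n} (hab : a ≠ b) (φ : (PiLp ⊤ fun _ : Fin n => ℝ) →L[ℝ] ℝ) :
    |φ (unitVec a)| + |φ (unitVec b)| ≤ ‖φ‖ := by
  have key : ∀ s t : ℝ, |s| ≤ 1 → |t| ≤ 1 →
      s * φ (unitVec a) + t * φ (unitVec b) ≤ ‖φ‖ := by
    intro s t hs ht
    have h := φ.le_of_opNorm_le_of_le le_rfl (norm_comb_unitVec_le hab hs ht)
    have h' := (le_abs_self _).trans h
    simpa using h'
  have h1 := key 1 1 (by simp) (by simp)
  have h2 := key 1 (-1) (by simp) (by simp)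
  have h3 := key (-1) 1 (by simp) (by simp)
  have h4 := key (-1) (-1) (by simp) (by simp)
  rcases abs_cases (φ (unitVec a)) with ⟨e, -⟩ | ⟨e, -⟩ <;>
    rcases abs_cases (φ (unitVec b)) with ⟨e', -⟩ | ⟨e', -⟩ <;> rw [e, e'] <;> linarith

lemma expand (w : (PiLp ⊤ fun _ : Fin n => ℝ) →L[ℝ] F) (x : PiLp ⊤ fun _ : Fin n => ℝ) :
    w x = ∑ i, PiLp.proj (𝕜 := ℝ) ⊤ (fun _ : Fin n => ℝ) i x • w (unitVec i) := by
  have : x = ∑ i, x i • unitVec i := by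
    ext j
    simp [unitVec_apply]
  conv_lhs => rw [this]
  simp

lemma projNorm_le_s11 (w : (PiLp ⊤ fun _ : Fin n => ℝ) →L[ℝ] F) :
    projNorm w ≤
      ∑ i, ‖PiLp.proj (𝕜 := ℝ) ⊤ (fun _ : Fin n => ℝ) i‖ * ‖w (unitVec i)‖ := by
  refine csInf_le ⟨0, ?_⟩ ⟨n, _, _, expand w, rfl⟩
  rintro r ⟨k, η, f, -, rfl⟩
  positivity

/-- The projective norm on `ℓ_1ⁿ ⊗ F` dominates the `ℓ_1` norm of any two coordinates. -/
lemma le_projNorm_s11 {a b : Fin n} (hab : a ≠ b) (w : (PiLp ⊤ fun _ : Fin n => ℝ) →L[ℝ] F) :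
    ‖w (unitVec a)‖ + ‖w (unitVec b)‖ ≤ projNorm w := by
  refine le_csInf ⟨_, n, _, _, expand w, rfl⟩ ?_
  rintro r ⟨k, η, f, hw, rfl⟩
  rw [hw, hw]
  calc _ ≤ ∑ i, ‖η i (unitVec a) • f i‖ + ∑ i, ‖η i (unitVec b) • f i‖ :=
        add_le_add (norm_sum_le _ _) (norm_sum_le _ _)
    _ = ∑ i, (|η i (unitVec a)| + |η i (unitVec b)|) * ‖f i‖ := by
        simp [norm_smul, add_mul, Finset.sum_add_distrib]
    _ ≤ _ := by
        gcongr with i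
        exact abs_add_abs_le hab (η i)

lemma KG_bddAbove :
    BddAbove { r : ℝ | ∃ (A : (PiLp ⊤ fun _ : Fin n => ℝ) →L[ℝ]
        ((PiLp ⊤ fun _ : Fin n => ℝ) →L[ℝ] ℝ))
      (u : ((PiLp ⊤ fun _ : Fin n => ℝ) →L[ℝ] ℝ) →L[ℝ] F),
      ‖A‖ ≤ 1 ∧ ‖u‖ ≤ 1 ∧ r = projNorm (u.comp A.flip) } := by
  refine ⟨∑ i, ‖PiLp.proj (𝕜 := ℝ) ⊤ (fun _ : Fin n => ℝ) i‖ * ‖unitVec i‖, ?_⟩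
  rintro r ⟨A, u, hA, hu, rfl⟩
  refine (projNorm_le_s11 _).trans ?_
  gcongr with i
  have hf : ‖u.comp A.flip‖ ≤ 1 := by
    refine (u.opNorm_comp_le _).trans ?_
    rw [ContinuousLinearMap.opNorm_flip]
    exact mul_le_one₀ hu A.opNorm_nonneg hA
  simpa using (u.comp A.flip).le_of_opNorm_le hf (unitVec i)

/-- The bilinear form `½ (p ⊗ p + p ⊗ q + q ⊗ p - q ⊗ q)` with matrix `½ [[1, 1], [1, -1]]` in
the functionals `p`, `q`. -/
noncomputable def hadamardForm {E : Type*} [NormedAddCommGroup E] [NormedSpace ℝ E]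
    (p q : E →L[ℝ] ℝ) : E →L[ℝ] (E →L[ℝ] ℝ) :=
  (1 / 2 : ℝ) • ((p + q).smulRight p + (p - q).smulRight q)

/-- The matrix `½ [[1, 1], [1, -1]]` on the coordinates `a`, `b`, as a map from `ℓ_∞ⁿ` to its
dual. -/
noncomputable def hadamardMap (a b : Fin n) : (PiLp ⊤ fun _ : Fin n => ℝ) →L[ℝ]
    ((PiLp ⊤ fun _ : Fin n => ℝ) →L[ℝ] ℝ) :=
  hadamardForm (PiLp.proj ⊤ (fun _ : Fin n => ℝ) a) (PiLp.proj ⊤ (fun _ : Fin n => ℝ) b)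

lemma hadamardMap_apply (a b : Fin n) (x y : PiLp ⊤ fun _ : Fin n => ℝ) :
    hadamardMap a b x y = 1 / 2 * ((x a + x b) * y a + (x a - x b) * y b) :=
  rfl

lemma norm_hadamardMap_le (a b : Fin n) : ‖hadamardMap a b‖ ≤ 1 := by
  refine ContinuousLinearMap.opNorm_le_bound₂ _ zero_le_one fun x y => ?_
  have hxa := PiLp.norm_apply_le x a
  have hxb := PiLp.norm_apply_le x b
  have hya := PiLp.norm_apply_le y a
  have hyb := PiLp.norm_apply_le y b
  rw [Real.norm_eq_abs] at hxa hxb hya hyb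
  have hs : |x a + x b| + |x a - x b| ≤ 2 * ‖x‖ := by
    rw [abs_le] at hxa hxb
    rcases abs_cases (x a + x b) with ⟨e, -⟩ | ⟨e, -⟩ <;>
      rcases abs_cases (x a - x b) with ⟨e', -⟩ | ⟨e', -⟩ <;> rw [e, e'] <;> linarith
  rw [hadamardMap_apply, Real.norm_eq_abs, abs_mul, abs_of_pos (by norm_num : (0 : ℝ) < 1 / 2)]
  calc _ ≤ 1 / 2 * (|x a + x b| * |y a| + |x a - x b| * |y b|) := by
        rw [← abs_mul, ← abs_mul]
        gcongr
        exact abs_add_le _ _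
    _ ≤ 1 / 2 * (|x a + x b| * ‖y‖ + |x a - x b| * ‖y‖) := by gcongr
    _ = 1 / 2 * (|x a + x b| + |x a - x b|) * ‖y‖ := by ring
    _ ≤ 1 / 2 * (2 * ‖x‖) * ‖y‖ := by gcongr
    _ = _ := by ring

end Tensor

/-- If `n ≥ 2` and `dim F ≥ 2`, then `K_G(ℓ_∞ⁿ, F) ≥ √2`. -/
theorem statement11 (n : ℕ) (hn : 2 ≤ n) (F : Type*)
    [NormedAddCommGroup F] [NormedSpace ℝ F] [CompleteSpace F]
    (hF : 2 ≤ Module.rank ℝ F) :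
    Real.sqrt 2 ≤ KG (PiLp ⊤ fun _ : Fin n => ℝ) F := by
  obtain ⟨f, g, hf, hg, hfg⟩ := exists_james_pair hF
  obtain ⟨a, b, hab⟩ : ∃ a b : Fin n, a ≠ b :=
    ⟨⟨0, by omega⟩, ⟨1, by omega⟩, by simp⟩
  let u : ((PiLp ⊤ fun _ : Fin n => ℝ) →L[ℝ] ℝ) →L[ℝ] F :=
    (ContinuousLinearMap.apply ℝ ℝ (unitVec a)).smulRight f +
      (ContinuousLinearMap.apply ℝ ℝ (unitVec b)).smulRight g
  have hu_apply : ∀ φ, u φ = φ (unitVec a) • f + φ (unitVec b) • g := fun φ => rfl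
  have hu : ‖u‖ ≤ 1 := by
    refine u.opNorm_le_bound zero_le_one fun φ => ?_
    rw [hu_apply, one_mul]
    calc _ ≤ |φ (unitVec a)| * ‖f‖ + |φ (unitVec b)| * ‖g‖ := by
          simpa [norm_smul] using norm_add_le (φ (unitVec a) • f) (φ (unitVec b) • g)
      _ ≤ |φ (unitVec a)| * 1 + |φ (unitVec b)| * 1 := by gcongr
      _ ≤ ‖φ‖ := by simpa using abs_add_abs_le hab φ
  refine le_trans ?_ (le_csSup KG_bddAbove ⟨hadamardMap a b, u, norm_hadamardMap_le a b, hu, rfl⟩)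
  refine le_trans ?_ (le_projNorm_s11 hab _)
  have ea : (u.comp (hadamardMap a b).flip) (unitVec a) = (1 / 2 : ℝ) • (f + g) := by
    simp [hu_apply, hadamardMap_apply, unitVec_apply, hab, hab.symm]
  have eb : (u.comp (hadamardMap a b).flip) (unitVec b) = (1 / 2 : ℝ) • (f - g) := by
    simp [hu_apply, hadamardMap_apply, unitVec_apply, hab, hab.symm, sub_eq_add_neg]
  rw [ea, eb, norm_smul, norm_smul, Real.norm_of_nonneg (by norm_num : (0 : ℝ) ≤ 1 / 2)]
  linarith
end

section
/- For 1 < p < 2 there is a constant C > 0, independent of n, such that ρ(S_p^{n,sa}, S_p^{n,sa}) ≥ C·n^{5/2 − 1/p} for all n ∈ ℕ. -/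
/-!
The lower bound comes from a random sign tensor. Write `h_a`, `a ∈ [n]²`, for the real coordinates
`A ↦ Re A_a + Im A_a` on the self-adjoint matrices, which are orthonormal for the Hilbert–Schmidt
inner product, and `e_a` for the dual basis. For signs `ε` on `[n]² × [n]²` put
`z₀ = ∑ ε_{ab} e_a ⊗ e_b` and `W = ∑ ε_{ab} h_a ⊗ h_b`, so that `W(z₀) = n⁴`. Trace duality
(`le_projSch`) gives `‖z₀‖_∧ ≥ n⁴ / ‖W‖`, where `‖W‖` is the norm of `W` as a bilinear form on
`S_p × S_p`, and it remains to choose `ε` such that `‖z₀‖_∨` and `‖W‖` are both small.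

A union bound (`exists_signs`) over lattice points, a substitute for nets of the Euclidean balls,
yields signs (`exists_tensor`) for which, up to an absolute constant,
* `∑ ε_{jk,lm} x_j x'_k y_l y'_m ≤ √n` on Euclidean unit balls of `ℝⁿ`, and
* `∑ ε_{ab} u_a v_b ≤ n` on Euclidean unit balls of `ℝ^{n²}`.

The second bound and `‖·‖_p ≤ n^{1/p - 1/2} ‖·‖_2` give `‖z₀‖_∨ ≲ n · n^{2/p - 1}`. For `W`, the
first bound controls pairs of rank-one projections, i.e. the norm on `S_1 × S_1`, by `√n`, while the
second one controls the norm on `S_2 × S_2` by `n`. Interpolating with the three lines theorem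
(`interp`), after fixing the eigenvectors of the two matrices, gives
`‖W‖ ≲ (√n)^{2/p - 1} n^{2 - 2/p} = n^{3/2 - 1/p}` (`pairing_bound`). The quotient is
`n⁴ / (n^{2/p} n^{3/2 - 1/p}) = n^{5/2 - 1/p}`.

Both norms are infima and suprema of sets of reals, so finiteness has to be checked as well: the
basis expansion `tensor_expand` shows that the relevant sets are nonempty and bounded.
-/

open scoped BigOperators TensorProduct

/-- The Schatten `p`-norm of a self-adjoint `n × n` complex matrix:
`(∑ |eigenvalues|^p)^{1/p}`. -/
noncomputable def schNorm (p : ℝ) {n : ℕ}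
    (A : selfAdjoint (Matrix (Fin n) (Fin n) ℂ)) : ℝ :=
  (∑ i, |Matrix.IsHermitian.eigenvalues
      (A.2 : (A : Matrix (Fin n) (Fin n) ℂ).IsHermitian) i| ^ p) ^ (1/p)

/-- The projective tensor norm on `S_p^{n,sa} ⊗ S_p^{n,sa}`. -/
noncomputable def projSch (p : ℝ) {n : ℕ}
    (z : TensorProduct ℝ (selfAdjoint (Matrix (Fin n) (Fin n) ℂ))
      (selfAdjoint (Matrix (Fin n) (Fin n) ℂ))) : ℝ :=
  sInf { r : ℝ | ∃ (k : ℕ) (a b : Fin k → selfAdjoint (Matrix (Fin n) (Fin n) ℂ)),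
    z = ∑ i, a i ⊗ₜ[ℝ] b i ∧ r = ∑ i, schNorm p (a i) * schNorm p (b i) }

/-- The injective tensor norm on `S_p^{n,sa} ⊗ S_p^{n,sa}`: the supremum of `|(φ ⊗ ψ)(z)|`
over functionals `φ, ψ` in the unit ball of the dual of `S_p^{n,sa}`. -/
noncomputable def injSch (p : ℝ) {n : ℕ}
    (z : TensorProduct ℝ (selfAdjoint (Matrix (Fin n) (Fin n) ℂ))
      (selfAdjoint (Matrix (Fin n) (Fin n) ℂ))) : ℝ :=
  sSup { r : ℝ | ∃ (φ ψ : selfAdjoint (Matrix (Fin n) (Fin n) ℂ) →ₗ[ℝ] ℝ),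
    (∀ x, |φ x| ≤ schNorm p x) ∧ (∀ y, |ψ y| ≤ schNorm p y) ∧
    r = |TensorProduct.lid ℝ ℝ (TensorProduct.map φ ψ z)| }

/-- `ρ(S_p^{n,sa}, S_p^{n,sa})`: the supremum of the projective norm over tensors of
injective norm at most one. -/
noncomputable def rhoSch (p : ℝ) (n : ℕ) : ℝ :=
  sSup { r : ℝ | ∃ z : TensorProduct ℝ (selfAdjoint (Matrix (Fin n) (Fin n) ℂ))
      (selfAdjoint (Matrix (Fin n) (Fin n) ℂ)),
    injSch p z ≤ 1 ∧ r = projSch p z }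

/-! ### Lattice points in a Euclidean ball -/

/-- The integer points of `ℝ^ι` with squared Euclidean norm at most `4 |ι|`. The box only serves to
make the set finite; it contains all such points. -/
noncomputable def latt (ι : Type*) [Fintype ι] [DecidableEq ι] : Finset (ι → ℤ) :=
  (Fintype.piFinset fun _ : ι =>
    Finset.Icc (-((4 * Fintype.card ι : ℕ) : ℤ)) ((4 * Fintype.card ι : ℕ) : ℤ)).filter
    fun v => ∑ i, v i ^ 2 ≤ 4 * Fintype.card ι

lemma sum_half_pow_natAbs (m : ℕ) :
    ∑ k ∈ Finset.Icc (-(m : ℤ)) m, (1 / 2 : ℝ) ^ k.natAbs = 3 - 2 * (1 / 2) ^ m := by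
  induction m with
  | zero => norm_num
  | succ m ih =>
    have h : Finset.Icc (-((m + 1 : ℕ) : ℤ)) ((m + 1 : ℕ) : ℤ)
        = insert (-((m + 1 : ℕ) : ℤ)) (insert ((m + 1 : ℕ) : ℤ) (Finset.Icc (-(m : ℤ)) m)) := by
      ext k
      simp only [Finset.mem_insert, Finset.mem_Icc]
      push_cast
      omega
    rw [h, Finset.sum_insert, Finset.sum_insert, ih, Int.natAbs_neg, Int.natAbs_natCast]
    · ring
    · simp
    · simp only [Finset.mem_insert, Finset.mem_Icc]
      push_cast
      omega

section
variable {ι : Type*} [Fintype ι] [DecidableEq ι]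

lemma mem_latt {v : ι → ℤ} : v ∈ latt ι ↔ ∑ i, v i ^ 2 ≤ 4 * Fintype.card ι := by
  simp only [latt, Finset.mem_filter, Fintype.mem_piFinset, Finset.mem_Icc, and_iff_right_iff_imp]
  intro h i
  have h1 : v i ^ 2 ≤ ∑ i, v i ^ 2 :=
    Finset.single_le_sum (f := fun i => v i ^ 2) (fun i _ => sq_nonneg _) (Finset.mem_univ i)
  push_cast
  constructor <;> nlinarith [Int.le_self_sq (v i), Int.le_self_sq (-v i)]

/-- Chernoff count: a point of `latt ι` has `ℓ¹`-norm at most `4 |ι|`, hence weight at least `16^{-|ι|}`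
under the product weight `∏ 2^{-|v i|}`, whose total mass is at most `3^{|ι|}`. -/
lemma card_latt_le : ((latt ι).card : ℝ) ≤ 48 ^ Fintype.card ι := by
  have key : ∀ v ∈ latt ι, (1 : ℝ) ≤ 16 ^ Fintype.card ι * ∏ i, (1 / 2 : ℝ) ^ (v i).natAbs := by
    intro v hv
    rw [mem_latt] at hv
    rw [Finset.prod_pow_eq_pow_sum]
    have h2 : ∑ i, (v i).natAbs ≤ 4 * Fintype.card ι := by
      zify
      refine le_trans (Finset.sum_le_sum fun i _ => ?_) hv
      rw [← sq_abs]
      exact Int.le_self_sq _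
    calc (1 : ℝ) = 16 ^ Fintype.card ι * (1 / 2 : ℝ) ^ (4 * Fintype.card ι) := by
          rw [pow_mul, ← mul_pow]; norm_num
      _ ≤ _ := by
          gcongr ?_ * ?_
          exact pow_le_pow_of_le_one (by norm_num) (by norm_num) h2
  calc ((latt ι).card : ℝ) = ∑ v ∈ latt ι, 1 := by simp
    _ ≤ ∑ v ∈ latt ι, 16 ^ Fintype.card ι * ∏ i, (1 / 2 : ℝ) ^ (v i).natAbs :=
        Finset.sum_le_sum key
    _ ≤ ∑ v ∈ Fintype.piFinset fun _ : ι =>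
          Finset.Icc (-((4 * Fintype.card ι : ℕ) : ℤ)) ((4 * Fintype.card ι : ℕ) : ℤ),
          16 ^ Fintype.card ι * ∏ i, (1 / 2 : ℝ) ^ (v i).natAbs :=
        Finset.sum_le_sum_of_subset_of_nonneg (Finset.filter_subset _ _)
          fun v _ _ => by positivity
    _ = 16 ^ Fintype.card ι * ∏ _i : ι, ∑ k ∈ Finset.Icc (-((4 * Fintype.card ι : ℕ) : ℤ))
          ((4 * Fintype.card ι : ℕ) : ℤ), (1 / 2 : ℝ) ^ k.natAbs := by
        rw [Finset.prod_univ_sum, Finset.mul_sum]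
    _ ≤ 16 ^ Fintype.card ι * 3 ^ Fintype.card ι := by
        rw [sum_half_pow_natAbs, Finset.prod_const, Finset.card_univ]
        gcongr
        · have : (1 / 2 : ℝ) ^ (4 * Fintype.card ι) ≤ 1 := pow_le_one₀ (by norm_num) (by norm_num)
          linarith
        · have : (0 : ℝ) ≤ (1 / 2 : ℝ) ^ (4 * Fintype.card ι) := by positivity
          linarith
    _ = 48 ^ Fintype.card ι := by rw [← mul_pow]; norm_num

/-- The lattice points norm linear forms on the Euclidean ball of radius `√|ι|`: rounding the scaled
vector upwards or downwards according to the sign of the coefficient can only increase the form. -/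
lemma latt_dom (c x : ι → ℝ) (hx : ∑ i, x i ^ 2 ≤ 1) :
    ∃ v ∈ latt ι, √(Fintype.card ι) * ∑ i, c i * x i ≤ ∑ i, c i * (v i : ℝ) := by
  set r := √(Fintype.card ι : ℝ) with hr
  have hr2 : r ^ 2 = Fintype.card ι := Real.sq_sqrt (Nat.cast_nonneg _)
  refine ⟨fun i => if 0 ≤ c i then ⌈r * x i⌉ else ⌊r * x i⌋, ?_, ?_⟩
  · rw [mem_latt]
    have h1 : ∀ i, (((if 0 ≤ c i then ⌈r * x i⌉ else ⌊r * x i⌋ : ℤ) : ℝ)) ^ 2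
        ≤ 2 * r ^ 2 * x i ^ 2 + 2 := by
      intro i
      have a1 := Int.le_ceil (r * x i)
      have a2 := Int.ceil_lt_add_one (r * x i)
      have a3 := Int.floor_le (r * x i)
      have a4 := Int.lt_floor_add_one (r * x i)
      split_ifs
      · nlinarith [sq_nonneg (r * x i - (⌈r * x i⌉ - r * x i))]
      · nlinarith [sq_nonneg (r * x i + (⌊r * x i⌋ - r * x i)),
          sq_nonneg (r * x i - (⌊r * x i⌋ - r * x i))]
    have h2 : (∑ i, (((if 0 ≤ c i then ⌈r * x i⌉ else ⌊r * x i⌋ : ℤ) : ℝ)) ^ 2)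
        ≤ 4 * Fintype.card ι := by
      refine (Finset.sum_le_sum fun i _ => h1 i).trans ?_
      rw [Finset.sum_add_distrib, ← Finset.mul_sum, hr2]
      simp only [Finset.sum_const, Finset.card_univ, nsmul_eq_mul]
      have : (0 : ℝ) ≤ Fintype.card ι := Nat.cast_nonneg _
      nlinarith
    exact_mod_cast h2
  · rw [Finset.mul_sum]
    refine Finset.sum_le_sum fun i _ => ?_
    have a1 := Int.le_ceil (r * x i)
    have a3 := Int.floor_le (r * x i)
    beta_reduce
    split_ifs with h
    · nlinarith
    · nlinarith

/-- `latt_dom` for a sum whose index `i` enters through a projection `π i`, as for one argument of a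
multilinear form. -/
lemma latt_dom' {I : Type*} [Fintype I] (F : I → ℝ) (π : I → ι) (x : ι → ℝ)
    (hx : ∑ i, x i ^ 2 ≤ 1) :
    ∃ v ∈ latt ι, √(Fintype.card ι) * ∑ i, F i * x (π i) ≤ ∑ i, F i * (v (π i) : ℝ) := by
  have h : ∀ y : ι → ℝ, ∑ i, F i * y (π i) = ∑ j, (∑ i with π i = j, F i) * y j := by
    intro y
    rw [← Finset.sum_fiberwise _ π]
    refine Finset.sum_congr rfl fun j _ => ?_
    rw [Finset.sum_mul]
    refine Finset.sum_congr rfl fun i hi => ?_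
    rw [(Finset.mem_filter.1 hi).2]
  obtain ⟨v, hv, hle⟩ := latt_dom (fun j => ∑ i with π i = j, F i) x hx
  exact ⟨v, hv, by rw [h, h (fun j => (v j : ℝ))]; exact hle⟩

lemma sum_sq_latt {v : ι → ℤ} (hv : v ∈ latt ι) : ∑ i, (v i : ℝ) ^ 2 ≤ 4 * Fintype.card ι := by
  exact_mod_cast mem_latt.1 hv

/-! ### Random signs -/

/-- Sub-Gaussian estimate of the exponential moment of a Rademacher sum, with the expectation
written as a sum over all sign patterns. -/
lemma sum_signs_exp (c : ι → ℝ) :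
    ∑ ε ∈ Fintype.piFinset (fun _ : ι => ({1, -1} : Finset ℝ)), Real.exp (∑ i, ε i * c i)
      ≤ 2 ^ Fintype.card ι * Real.exp ((∑ i, c i ^ 2) / 2) := by
  have h : ∀ i, ∑ s ∈ ({1, -1} : Finset ℝ), Real.exp (s * c i) ≤ 2 * Real.exp (c i ^ 2 / 2) := by
    intro i
    rw [Finset.sum_pair (by norm_num)]
    have := Real.cosh_le_exp_half_sq (c i)
    rw [Real.cosh_eq] at this
    rw [one_mul, neg_one_mul]
    linarith
  simp_rw [Real.exp_sum]
  rw [← Finset.prod_univ_sum (fun _ => ({1, -1} : Finset ℝ)) (fun i s => Real.exp (s * c i))]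
  refine (Finset.prod_le_prod (fun i _ => Finset.sum_nonneg fun _ _ => (Real.exp_pos _).le)
    fun i _ => h i).trans ?_
  rw [Finset.prod_mul_distrib, Finset.prod_const, Finset.card_univ, ← Real.exp_sum, Finset.sum_div]

/-- Union bound: a single choice of signs controls two finite families of linear forms, with at most
`exp LS` and `exp LT` members and with coefficient vectors of squared norm at most `V` and `W`. -/
lemma exists_signs {σ τ : Type} (S : Finset σ) (T : Finset τ) (c : σ → ι → ℝ) (d : τ → ι → ℝ)
    (V W LS LT : ℝ) (hS : (S.card : ℝ) ≤ Real.exp LS) (hT : (T.card : ℝ) ≤ Real.exp LT)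
    (hc : ∀ s ∈ S, ∑ i, c s i ^ 2 ≤ V) (hd : ∀ t ∈ T, ∑ i, d t i ^ 2 ≤ W) :
    ∃ ε : ι → ℝ, (∀ i, ε i ^ 2 = 1) ∧ (∀ s ∈ S, ∑ i, ε i * c s i ≤ 1 + LS + V / 2) ∧
      (∀ t ∈ T, ∑ i, ε i * d t i ≤ 1 + LT + W / 2) := by
  set Ω := Fintype.piFinset (fun _ : ι => ({1, -1} : Finset ℝ)) with hΩ
  have hcard : (Ω.card : ℝ) = 2 ^ Fintype.card ι := by
    rw [hΩ, Fintype.card_piFinset, Finset.prod_const, Finset.card_pair (by norm_num)]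
    simp
  have hav : ∀ {κ : Type} (R : Finset κ) (e : κ → ι → ℝ) (X L : ℝ),
      (R.card : ℝ) ≤ Real.exp L → (∀ r ∈ R, ∑ i, e r i ^ 2 ≤ X) →
      ∑ ε ∈ Ω, (∑ r ∈ R, Real.exp (∑ i, ε i * e r i)) / Real.exp (L + X / 2) ≤ Ω.card := by
    intro κ R e X L hR he
    rw [← Finset.sum_div, div_le_iff₀ (Real.exp_pos _), Finset.sum_comm, hcard]
    calc ∑ r ∈ R, ∑ ε ∈ Ω, Real.exp (∑ i, ε i * e r i)
        ≤ ∑ r ∈ R, 2 ^ Fintype.card ι * Real.exp (X / 2) := by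
          refine Finset.sum_le_sum fun r hr => (sum_signs_exp (e r)).trans ?_
          gcongr
          exact he r hr
      _ = R.card * (2 ^ Fintype.card ι * Real.exp (X / 2)) := by simp
      _ ≤ Real.exp L * (2 ^ Fintype.card ι * Real.exp (X / 2)) := by gcongr
      _ = _ := by rw [Real.exp_add]; ring
  have hne : Ω.Nonempty := by
    rw [← Finset.card_pos]
    have : (0 : ℝ) < Ω.card := by rw [hcard]; positivity
    exact_mod_cast this
  -- Each of the two normalized exponential sums has mean at most `1`, so some sign pattern makes their
  -- total at most `2 ≤ exp 1`.
  obtain ⟨ε, hε, hle⟩ := Finset.exists_le_of_sum_le hne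
    (f := fun ε => (∑ r ∈ S, Real.exp (∑ i, ε i * c r i)) / Real.exp (LS + V / 2)
      + (∑ r ∈ T, Real.exp (∑ i, ε i * d r i)) / Real.exp (LT + W / 2)) (g := fun _ => 2) (by
      rw [Finset.sum_add_distrib]
      have h1 := hav S c V LS hS hc
      have h2 := hav T d W LT hT hd
      simp only [Finset.sum_const, nsmul_eq_mul]
      linarith)
  have fin : ∀ {κ : Type} (R : Finset κ) (e : κ → ι → ℝ) (Y : ℝ),
      (∑ r ∈ R, Real.exp (∑ i, ε i * e r i)) / Real.exp Y ≤ 2 →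
      ∀ r ∈ R, ∑ i, ε i * e r i ≤ 1 + Y := by
    intro κ R e Y hY r hr
    rw [div_le_iff₀ (Real.exp_pos _)] at hY
    have h1 : Real.exp (∑ i, ε i * e r i) ≤ 2 * Real.exp Y :=
      (Finset.single_le_sum (f := fun r => Real.exp (∑ i, ε i * e r i))
        (fun _ _ => (Real.exp_pos _).le) hr).trans hY
    rw [← Real.exp_le_exp, Real.exp_add]
    refine h1.trans ?_
    gcongr
    linarith [Real.add_one_le_exp (1 : ℝ)]
  have p1 : 0 ≤ (∑ r ∈ S, Real.exp (∑ i, ε i * c r i)) / Real.exp (LS + V / 2) := by positivity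
  have p2 : 0 ≤ (∑ r ∈ T, Real.exp (∑ i, ε i * d r i)) / Real.exp (LT + W / 2) := by positivity
  refine ⟨ε, fun i => ?_, fun s hs => ?_, fun t ht => ?_⟩
  · have := Fintype.mem_piFinset.1 hε i
    simp only [Finset.mem_insert, Finset.mem_singleton] at this
    rcases this with h | h <;> rw [h] <;> norm_num
  · have := fin S c (LS + V / 2) (by linarith) s hs
    linarith
  · have := fin T d (LT + W / 2) (by linarith) t ht
    linarith
end

lemma card_latt_exp {ι : Type*} [Fintype ι] [DecidableEq ι] :
    ((latt ι).card : ℝ) ≤ Real.exp (4 * Fintype.card ι) := by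
  refine card_latt_le.trans ?_
  have h : (48 : ℝ) ≤ Real.exp 4 := by
    have h1 : Real.exp 4 = Real.exp 1 ^ 4 := by rw [← Real.exp_nat_mul]; norm_num
    have h2 : (2.7 : ℝ) ≤ Real.exp 1 := by linarith [Real.exp_one_gt_d9]
    rw [h1]
    calc (48 : ℝ) ≤ 2.7 ^ 4 := by norm_num
      _ ≤ _ := by gcongr
  calc (48 : ℝ) ^ Fintype.card ι ≤ Real.exp 4 ^ Fintype.card ι := by gcongr
    _ = _ := by rw [← Real.exp_nat_mul, mul_comm]

lemma sum_prod_mul {α β : Type*} [Fintype α] [Fintype β] (f : α → ℝ) (g : β → ℝ) :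
    ∑ i : α × β, f i.1 * g i.2 = (∑ i, f i) * ∑ j, g j := by
  rw [Finset.sum_mul_sum, Fintype.sum_prod_type]

/-- Positions of an `n × n` matrix, indexing the real coordinates of a self-adjoint matrix. -/
abbrev Idx (n : ℕ) := Fin n × Fin n

/-- Signs whose associated four-linear form on `ℝⁿ` has norm `O(√n)` and whose associated bilinear form
on `ℝ^{n²}` has norm `O(n)`. -/
lemma exists_tensor (n : ℕ) (hn : 1 ≤ n) :
    ∃ ε : Idx n × Idx n → ℝ, (∀ i, ε i ^ 2 = 1) ∧
      (∀ x x' y y' : Fin n → ℝ, ∑ i, x i ^ 2 ≤ 1 → ∑ i, x' i ^ 2 ≤ 1 → ∑ i, y i ^ 2 ≤ 1 →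
        ∑ i, y' i ^ 2 ≤ 1 →
        ∑ i : Idx n × Idx n, ε i * (x i.1.1 * x' i.1.2 * (y i.2.1 * y' i.2.2)) ≤ 145 * √n) ∧
      (∀ u v : Idx n → ℝ, ∑ i, u i ^ 2 ≤ 1 → ∑ i, v i ^ 2 ≤ 1 →
        ∑ i : Idx n × Idx n, ε i * (u i.1 * v i.2) ≤ 145 * n) := by
  have hn0 : (1 : ℝ) ≤ n := by exact_mod_cast hn
  set r := √(n : ℝ) with hr
  have hr2 : r ^ 2 = n := Real.sq_sqrt (Nat.cast_nonneg _)
  have hr0 : 0 < r := Real.sqrt_pos.2 (by linarith)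
  -- A product of four lattice points has squared norm at most `(4n)⁴`, a product of two points of the
  -- `n²`-dimensional lattice at most `(4n²)²`. The factors `1 / (n√n)` and `1 / n` bring these to the
  -- orders `n` and `n²` of the logarithms of the numbers of forms, which balances `1 + L + V / 2`.
  obtain ⟨ε, h1, h2, h3⟩ := exists_signs (ι := Idx n × Idx n)
    ((latt (Fin n) ×ˢ latt (Fin n)) ×ˢ (latt (Fin n) ×ˢ latt (Fin n)))
    (latt (Idx n) ×ˢ latt (Idx n))
    (fun s i => (n * r)⁻¹ * ((s.1.1 i.1.1 : ℝ) * s.1.2 i.1.2 * (s.2.1 i.2.1 * s.2.2 i.2.2)))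
    (fun s i => (n : ℝ)⁻¹ * ((s.1 i.1 : ℝ) * s.2 i.2))
    (256 * (n : ℝ)) (16 * (n : ℝ) ^ 2) (16 * (n : ℝ)) (8 * (n : ℝ) ^ 2)
    (by
      have h := card_latt_exp (ι := Fin n)
      rw [Fintype.card_fin] at h
      simp only [Finset.card_product]
      push_cast
      calc ((latt (Fin n)).card : ℝ) * (latt (Fin n)).card
            * ((latt (Fin n)).card * (latt (Fin n)).card)
          ≤ Real.exp (4 * n) * Real.exp (4 * n) * (Real.exp (4 * n) * Real.exp (4 * n)) := by
            gcongr
        _ = _ := by simp only [← Real.exp_add]; ring_nf)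
    (by
      have h := card_latt_exp (ι := Idx n)
      rw [Fintype.card_prod, Fintype.card_fin] at h
      simp only [Finset.card_product]
      push_cast at h ⊢
      calc ((latt (Idx n)).card : ℝ) * (latt (Idx n)).card
          ≤ Real.exp (4 * (n * n)) * Real.exp (4 * (n * n)) := by
            gcongr
        _ = _ := by simp only [← Real.exp_add]; ring_nf)
    (by
      rintro ⟨⟨a, b⟩, ⟨c, d⟩⟩ hs
      simp only [Finset.mem_product] at hs
      obtain ⟨⟨ha, hb⟩, hc, hd⟩ := hs
      have ha := sum_sq_latt ha
      have hb := sum_sq_latt hb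
      have hc := sum_sq_latt hc
      have hd := sum_sq_latt hd
      rw [Fintype.card_fin] at ha hb hc hd
      have : ∑ i : Idx n × Idx n, ((n * r)⁻¹ * ((a i.1.1 : ℝ) * b i.1.2 * (c i.2.1 * d i.2.2))) ^ 2
          = ((n * r)⁻¹) ^ 2 * (((∑ i, (a i : ℝ) ^ 2) * ∑ i, (b i : ℝ) ^ 2)
            * ((∑ i, (c i : ℝ) ^ 2) * ∑ i, (d i : ℝ) ^ 2)) := by
        rw [← sum_prod_mul, ← sum_prod_mul, ← sum_prod_mul, Finset.mul_sum]
        exact Finset.sum_congr rfl fun i _ => by ring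
      simp only
      rw [this]
      calc ((n * r)⁻¹) ^ 2 * (((∑ i, (a i : ℝ) ^ 2) * ∑ i, (b i : ℝ) ^ 2)
            * ((∑ i, (c i : ℝ) ^ 2) * ∑ i, (d i : ℝ) ^ 2))
          ≤ ((n * r)⁻¹) ^ 2 * ((4 * (n : ℝ) * (4 * n)) * (4 * n * (4 * n))) := by
            gcongr
        _ = 256 * (n : ℝ) := by
            rw [inv_pow, mul_pow, hr2]
            field_simp
            norm_num)
    (by
      rintro ⟨a, b⟩ hs
      simp only [Finset.mem_product] at hs
      obtain ⟨ha, hb⟩ := hs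
      have ha := sum_sq_latt ha
      have hb := sum_sq_latt hb
      rw [Fintype.card_prod, Fintype.card_fin] at ha hb
      push_cast at ha hb
      have : ∑ i : Idx n × Idx n, ((n : ℝ)⁻¹ * ((a i.1 : ℝ) * b i.2)) ^ 2
          = ((n : ℝ)⁻¹) ^ 2 * ((∑ i, (a i : ℝ) ^ 2) * ∑ i, (b i : ℝ) ^ 2) := by
        rw [← sum_prod_mul, Finset.mul_sum]
        exact Finset.sum_congr rfl fun i _ => by ring
      simp only
      rw [this]
      calc ((n : ℝ)⁻¹) ^ 2 * ((∑ i, (a i : ℝ) ^ 2) * ∑ i, (b i : ℝ) ^ 2)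
          ≤ ((n : ℝ)⁻¹) ^ 2 * ((4 * ((n : ℝ) * n)) * (4 * (n * n))) := by gcongr
        _ = 16 * (n : ℝ) ^ 2 := by field_simp; norm_num)
  refine ⟨ε, h1, fun x x' y y' hx hx' hy hy' => ?_, fun u v hu hv => ?_⟩
  · obtain ⟨a, ha, ha'⟩ := latt_dom' (fun i : Idx n × Idx n => ε i * (x' i.1.2 * (y i.2.1 * y' i.2.2)))
      (fun i => i.1.1) x hx
    obtain ⟨b, hb, hb'⟩ := latt_dom' (fun i : Idx n × Idx n => ε i * (a i.1.1 * (y i.2.1 * y' i.2.2)))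
      (fun i => i.1.2) x' hx'
    obtain ⟨c, hc, hc'⟩ := latt_dom' (fun i : Idx n × Idx n => ε i * (a i.1.1 * b i.1.2 * y' i.2.2))
      (fun i => i.2.1) y hy
    obtain ⟨d, hd, hd'⟩ := latt_dom' (fun i : Idx n × Idx n => ε i * (a i.1.1 * b i.1.2 * c i.2.1))
      (fun i => i.2.2) y' hy'
    have hf := h2 ((a, b), (c, d)) (by simp [ha, hb, hc, hd])
    rw [Fintype.card_fin, ← hr] at ha' hb' hc' hd'
    have e0 : ∑ i : Idx n × Idx n, ε i * (x i.1.1 * x' i.1.2 * (y i.2.1 * y' i.2.2))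
      = ∑ i : Idx n × Idx n, ε i * (x' i.1.2 * (y i.2.1 * y' i.2.2)) * x i.1.1 :=
      Finset.sum_congr rfl fun i _ => by ring
    have e1 : ∑ i : Idx n × Idx n, ε i * (x' i.1.2 * (y i.2.1 * y' i.2.2)) * a i.1.1
      = ∑ i : Idx n × Idx n, ε i * (a i.1.1 * (y i.2.1 * y' i.2.2)) * x' i.1.2 :=
      Finset.sum_congr rfl fun i _ => by ring
    have e2 : ∑ i : Idx n × Idx n, ε i * (a i.1.1 * (y i.2.1 * y' i.2.2)) * b i.1.2
      = ∑ i : Idx n × Idx n, ε i * (a i.1.1 * b i.1.2 * y' i.2.2) * y i.2.1 :=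
      Finset.sum_congr rfl fun i _ => by ring
    have e3 : ∑ i : Idx n × Idx n, ε i * (a i.1.1 * b i.1.2 * y' i.2.2) * c i.2.1
      = ∑ i : Idx n × Idx n, ε i * (a i.1.1 * b i.1.2 * c i.2.1) * y' i.2.2 :=
      Finset.sum_congr rfl fun i _ => by ring
    have e4 : ∑ i : Idx n × Idx n, ε i * (a i.1.1 * b i.1.2 * c i.2.1) * d i.2.2
      = (n * r) * ∑ i : Idx n × Idx n, ε i * ((n * r)⁻¹ * ((a i.1.1 : ℝ) * b i.1.2 *
        (c i.2.1 * d i.2.2))) := by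
      rw [Finset.mul_sum]
      refine Finset.sum_congr rfl fun i _ => ?_
      field_simp
    rw [← e0] at ha'
    rw [e1] at ha'
    rw [e2] at hb'
    rw [e3] at hc'
    rw [e4] at hd'
    simp only at hf
    set X := ∑ i : Idx n × Idx n, ε i * (x i.1.1 * x' i.1.2 * (y i.2.1 * y' i.2.2))
    have hfin : r * (r * (r * (r * X))) ≤ n * r * (145 * n) := by
      have k1 := mul_le_mul_of_nonneg_left ha' hr0.le
      have k2 := mul_le_mul_of_nonneg_left (k1.trans hb') hr0.le
      have k3 := mul_le_mul_of_nonneg_left (k2.trans hc') hr0.le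
      refine (k3.trans hd').trans ?_
      -- `1 + 16 n + 256 n / 2 ≤ 145 n`
      gcongr
      linarith
    have : (n : ℝ) ^ 2 * X ≤ n ^ 2 * (145 * r) := by
      calc (n : ℝ) ^ 2 * X = r * (r * (r * (r * X))) := by rw [← hr2]; ring
        _ ≤ _ := hfin
        _ = _ := by ring
    exact le_of_mul_le_mul_left this (by positivity)
  · obtain ⟨a, ha, ha'⟩ := latt_dom' (fun i : Idx n × Idx n => ε i * v i.2) (fun i => i.1) u hu
    obtain ⟨b, hb, hb'⟩ := latt_dom' (fun i : Idx n × Idx n => ε i * a i.1) (fun i => i.2) v hv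
    have hf := h3 (a, b) (by simp [ha, hb])
    rw [Fintype.card_prod, Fintype.card_fin, Nat.cast_mul, Real.sqrt_mul_self (by linarith)]
      at ha' hb'
    have e0 : ∑ i : Idx n × Idx n, ε i * (u i.1 * v i.2)
      = ∑ i : Idx n × Idx n, ε i * v i.2 * u i.1 := Finset.sum_congr rfl fun i _ => by ring
    have e1 : ∑ i : Idx n × Idx n, ε i * v i.2 * a i.1
      = ∑ i : Idx n × Idx n, ε i * a i.1 * v i.2 := Finset.sum_congr rfl fun i _ => by ring
    have e2 : ∑ i : Idx n × Idx n, ε i * a i.1 * b i.2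
      = n * ∑ i : Idx n × Idx n, ε i * ((n : ℝ)⁻¹ * ((a i.1 : ℝ) * b i.2)) := by
      rw [Finset.mul_sum]
      refine Finset.sum_congr rfl fun i _ => ?_
      field_simp
    rw [← e0, e1] at ha'
    rw [e2] at hb'
    simp only at hf
    set X := ∑ i : Idx n × Idx n, ε i * (u i.1 * v i.2)
    have : (n : ℝ) * (n * X) ≤ n * (n * (145 * n)) := by
      refine ((mul_le_mul_of_nonneg_left ha' (by positivity)).trans hb').trans ?_
      -- `1 + 8 n² + 16 n² / 2 ≤ 145 n²`
      gcongr
      nlinarith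
    exact le_of_mul_le_mul_left (le_of_mul_le_mul_left this (by positivity)) (by positivity)

/-! ### Interpolation of bilinear forms -/

/-- The analytic family `z ↦ sign l · |l|^{p (1 - z / 2)}` used for interpolation: of modulus
`|l|^p` on `Re z = 0`, of modulus `|l|^{p/2}` on `Re z = 1`, and equal to `l` at `z = 2 - 2 / p`. At
`l = 0` it is identically `0`, since `Real.sign 0 = 0`. -/
noncomputable def interpFun (p l : ℝ) (z : ℂ) : ℂ :=
  (Real.sign l : ℂ) * Complex.exp ((Real.log |l| : ℂ) * (p * (1 - z / 2)))

lemma norm_interpFun (p l : ℝ) (z : ℂ) :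
    ‖interpFun p l z‖ = |Real.sign l| * Real.exp (Real.log |l| * (p * (1 - z.re / 2))) := by
  rw [interpFun, norm_mul, Complex.norm_real, Real.norm_eq_abs, Complex.norm_exp]
  congr 3
  rw [Complex.re_ofReal_mul, Complex.re_ofReal_mul]
  simp

lemma norm_interpFun' {p l : ℝ} (hl : l ≠ 0) (z : ℂ) :
    ‖interpFun p l z‖ = |l| ^ (p * (1 - z.re / 2)) := by
  rw [norm_interpFun, Real.rpow_def_of_pos (abs_pos.2 hl)]
  rcases lt_or_gt_of_ne hl with h | h
  · rw [Real.sign_of_neg h]; simp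
  · rw [Real.sign_of_pos h]; simp

lemma interpFun_zero (p : ℝ) (z : ℂ) : interpFun p 0 z = 0 := by
  simp [interpFun]

lemma norm_interpFun_re_zero {p l : ℝ} {z : ℂ} (hz : z.re = 0) :
    ‖interpFun p l z‖ ≤ |l| ^ p := by
  rcases eq_or_ne l 0 with rfl | hl
  · rw [interpFun_zero, norm_zero]; positivity
  · rw [norm_interpFun' hl, hz]; simp

lemma norm_interpFun_re_one {p l : ℝ} {z : ℂ} (hz : z.re = 1) :
    ‖interpFun p l z‖ ^ 2 ≤ |l| ^ p := by
  rcases eq_or_ne l 0 with rfl | hl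
  · rw [interpFun_zero, norm_zero, zero_pow two_ne_zero]; positivity
  · rw [norm_interpFun' hl, hz, ← Real.rpow_natCast, ← Real.rpow_mul (abs_nonneg _)]
    apply le_of_eq
    congr 1
    push_cast
    ring

lemma norm_interpFun_le_one {p l : ℝ} {z : ℂ} (hp : 0 ≤ p) (hl : |l| ≤ 1) (hz : z.re ≤ 1) :
    ‖interpFun p l z‖ ≤ 1 := by
  rcases eq_or_ne l 0 with rfl | hl0
  · rw [interpFun_zero, norm_zero]; exact zero_le_one
  · rw [norm_interpFun' hl0]
    refine Real.rpow_le_one (abs_nonneg _) hl (mul_nonneg hp (by linarith))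

lemma interpFun_eq {p : ℝ} (hp : 0 < p) (l : ℝ) :
    interpFun p l ((2 - 2 / p : ℝ) : ℂ) = l := by
  have h1 : (p * (1 - ((2 - 2 / p : ℝ) : ℂ) / 2) : ℂ) = 1 := by
    have : p * (1 - (2 - 2 / p) / 2) = 1 := by field_simp; ring
    exact_mod_cast congrArg (fun x : ℝ => (x : ℂ)) this
  rw [interpFun, h1, mul_one]
  rcases lt_trichotomy l 0 with h | h | h
  · rw [Real.sign_of_neg h, ← Complex.ofReal_exp, Real.exp_log (abs_pos.2 h.ne), abs_of_neg h]
    push_cast; ring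
  · simp [h]
  · rw [Real.sign_of_pos h, ← Complex.ofReal_exp, Real.exp_log (abs_pos.2 h.ne'), abs_of_pos h]
    push_cast; ring

lemma differentiable_interpFun (p l : ℝ) : Differentiable ℂ (interpFun p l) := by
  unfold interpFun
  fun_prop

/-- Complexification of a real bilinear form on Euclidean balls costs at most a factor `4`, by
splitting both arguments into real and imaginary parts. -/
lemma complex_bilin_bound {ι κ : Type*} [Fintype ι] [Fintype κ] (c : ι → κ → ℝ) (b : ℝ)
    (hb : ∀ (s : ι → ℝ) (t : κ → ℝ), ∑ i, s i ^ 2 ≤ 1 → ∑ j, t j ^ 2 ≤ 1 →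
      |∑ i, ∑ j, c i j * s i * t j| ≤ b) (s : ι → ℂ) (t : κ → ℂ)
    (hs : ∑ i, ‖s i‖ ^ 2 ≤ 1) (ht : ∑ j, ‖t j‖ ^ 2 ≤ 1) :
    ‖∑ i, ∑ j, (c i j : ℂ) * s i * t j‖ ≤ 4 * b := by
  have hre : ∀ z : ℂ, z.re ^ 2 ≤ ‖z‖ ^ 2 := fun z => by
    rw [Complex.sq_norm, Complex.normSq_apply]; nlinarith [sq_nonneg z.im]
  have him : ∀ z : ℂ, z.im ^ 2 ≤ ‖z‖ ^ 2 := fun z => by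
    rw [Complex.sq_norm, Complex.normSq_apply]; nlinarith [sq_nonneg z.re]
  have s1 := (Finset.sum_le_sum fun i _ => hre (s i)).trans hs
  have s2 := (Finset.sum_le_sum fun i _ => him (s i)).trans hs
  have t1 := (Finset.sum_le_sum fun i _ => hre (t i)).trans ht
  have t2 := (Finset.sum_le_sum fun i _ => him (t i)).trans ht
  have e1 : (∑ i, ∑ j, (c i j : ℂ) * s i * t j).re
      = ∑ i, ∑ j, c i j * (s i).re * (t j).re - ∑ i, ∑ j, c i j * (s i).im * (t j).im := by
    simp only [Complex.re_sum, ← Finset.sum_sub_distrib]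
    refine Finset.sum_congr rfl fun i _ => Finset.sum_congr rfl fun j _ => ?_
    simp
  have e2 : (∑ i, ∑ j, (c i j : ℂ) * s i * t j).im
      = ∑ i, ∑ j, c i j * (s i).re * (t j).im + ∑ i, ∑ j, c i j * (s i).im * (t j).re := by
    simp only [Complex.im_sum, ← Finset.sum_add_distrib]
    refine Finset.sum_congr rfl fun i _ => Finset.sum_congr rfl fun j _ => ?_
    simp
  refine (Complex.norm_le_abs_re_add_abs_im _).trans ?_
  rw [e1, e2]
  have := abs_sub (∑ i, ∑ j, c i j * (s i).re * (t j).re) (∑ i, ∑ j, c i j * (s i).im * (t j).im)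
  have := abs_add_le (∑ i, ∑ j, c i j * (s i).re * (t j).im)
    (∑ i, ∑ j, c i j * (s i).im * (t j).re)
  linarith [hb _ _ s1 t1, hb _ _ s2 t2, hb _ _ s1 t2, hb _ _ s2 t1]

/-- Interpolation on the unit balls of `ℓ_p` by the three lines theorem. -/
lemma interp_unit {ι κ : Type} [Fintype ι] [Fintype κ] {p : ℝ} (hp1 : 1 < p) (hp2 : p < 2)
    (c : ι → κ → ℝ) (a b : ℝ) (ha0 : 0 ≤ a) (ha : ∀ i j, |c i j| ≤ a)
    (hb : ∀ (s : ι → ℝ) (t : κ → ℝ), ∑ i, s i ^ 2 ≤ 1 → ∑ j, t j ^ 2 ≤ 1 →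
      |∑ i, ∑ j, c i j * s i * t j| ≤ b) (l : ι → ℝ) (m : κ → ℝ)
    (hl : ∑ i, |l i| ^ p ≤ 1) (hm : ∑ j, |m j| ^ p ≤ 1) :
    |∑ i, ∑ j, c i j * l i * m j| ≤ a ^ (2 / p - 1) * (4 * b) ^ (2 - 2 / p) := by
  have hp0 : 0 < p := by linarith
  have small : ∀ {α : Type} [Fintype α] (f : α → ℝ), ∑ i, |f i| ^ p ≤ 1 → ∀ i, |f i| ≤ 1 := by
    intro α _ f hf i
    have h := (Finset.single_le_sum (f := fun i => |f i| ^ p) (fun i _ => by positivity)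
      (Finset.mem_univ i)).trans hf
    by_contra! h'
    exact absurd h (not_le.2 (Real.one_lt_rpow h' hp0))
  set f : ℂ → ℂ := fun z => ∑ i, ∑ j, (c i j : ℂ) * interpFun p (l i) z * interpFun p (m j) z
    with hf
  have hdiff : Differentiable ℂ f := by
    refine Differentiable.fun_sum fun i _ => Differentiable.fun_sum fun j _ => ?_
    exact ((differentiable_const _).mul (differentiable_interpFun _ _)).mul
      (differentiable_interpFun _ _)
  have hθ0 : 0 ≤ 2 - 2 / p := by
    rw [sub_nonneg, div_le_iff₀ hp0]; linarith
  have hθ1 : 2 - 2 / p ≤ 1 := by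
    have : 1 ≤ 2 / p := by rw [le_div_iff₀ hp0]; linarith
    linarith
  have key := Complex.HadamardThreeLines.norm_le_interp_of_mem_verticalClosedStrip' (f := f)
    (z := ((2 - 2 / p : ℝ) : ℂ)) (a := a) (b := 4 * b) (l := 0) (u := 1) zero_lt_one
    (by simp only [Complex.HadamardThreeLines.verticalClosedStrip, Set.mem_preimage,
          Complex.ofReal_re, Set.mem_Icc]; exact ⟨hθ0, hθ1⟩)
    hdiff.diffContOnCl
    (by
      refine ⟨∑ i, ∑ j, |c i j|, ?_⟩
      rintro _ ⟨z, hz, rfl⟩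
      simp only [Complex.HadamardThreeLines.verticalClosedStrip, Set.mem_preimage,
        Set.mem_Icc] at hz
      refine (norm_sum_le _ _).trans (Finset.sum_le_sum fun i _ => ?_)
      refine (norm_sum_le _ _).trans (Finset.sum_le_sum fun j _ => ?_)
      rw [norm_mul, norm_mul, Complex.norm_real, Real.norm_eq_abs]
      have h1 := norm_interpFun_le_one hp0.le (small l hl i) hz.2
      have h2 := norm_interpFun_le_one hp0.le (small m hm j) hz.2
      calc |c i j| * ‖interpFun p (l i) z‖ * ‖interpFun p (m j) z‖
          ≤ |c i j| * 1 * 1 := by gcongr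
        _ = _ := by ring)
    (by
      intro z hz
      have hz : z.re = 0 := hz
      calc ‖f z‖ ≤ ∑ i, ∑ j, a * (‖interpFun p (l i) z‖ * ‖interpFun p (m j) z‖) := by
            refine (norm_sum_le _ _).trans (Finset.sum_le_sum fun i _ => ?_)
            refine (norm_sum_le _ _).trans (Finset.sum_le_sum fun j _ => ?_)
            rw [norm_mul, norm_mul, Complex.norm_real, Real.norm_eq_abs, mul_assoc]
            gcongr
            exact ha i j
        _ = a * ((∑ i, ‖interpFun p (l i) z‖) * ∑ j, ‖interpFun p (m j) z‖) := by
            rw [Finset.sum_mul_sum, Finset.mul_sum]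
            simp only [Finset.mul_sum]
        _ ≤ a * (1 * 1) := by
            gcongr
            · exact (Finset.sum_le_sum fun i _ => norm_interpFun_re_zero hz).trans hl
            · exact (Finset.sum_le_sum fun i _ => norm_interpFun_re_zero hz).trans hm
        _ = a := by ring)
    (by
      intro z hz
      have hz : z.re = 1 := hz
      exact complex_bilin_bound c b hb _ _
        ((Finset.sum_le_sum fun i _ => norm_interpFun_re_one hz).trans hl)
        ((Finset.sum_le_sum fun i _ => norm_interpFun_re_one hz).trans hm))
  have e : f ((2 - 2 / p : ℝ) : ℂ) = ((∑ i, ∑ j, c i j * l i * m j : ℝ) : ℂ) := by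
    simp only [hf, interpFun_eq hp0]
    push_cast
    rfl
  rw [e, Complex.norm_real, Real.norm_eq_abs, Complex.ofReal_re] at key
  convert key using 3 <;> ring

/-- A real bilinear form bounded by `a` on `ℓ_1 × ℓ_1` and by `b` on `ℓ_2 × ℓ_2` is bounded by
`a^{1-θ} (4b)^θ` on `ℓ_p × ℓ_p`, where `θ = 2 - 2 / p`, i.e. `1 / p = (1 - θ) + θ / 2`. -/
lemma interp {ι κ : Type} [Fintype ι] [Fintype κ] {p : ℝ} (hp1 : 1 < p) (hp2 : p < 2)
    (c : ι → κ → ℝ) (a b : ℝ) (ha0 : 0 ≤ a) (ha : ∀ i j, |c i j| ≤ a)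
    (hb : ∀ (s : ι → ℝ) (t : κ → ℝ), ∑ i, s i ^ 2 ≤ 1 → ∑ j, t j ^ 2 ≤ 1 →
      |∑ i, ∑ j, c i j * s i * t j| ≤ b) (l : ι → ℝ) (m : κ → ℝ) :
    |∑ i, ∑ j, c i j * l i * m j| ≤ a ^ (2 / p - 1) * (4 * b) ^ (2 - 2 / p) *
      ((∑ i, |l i| ^ p) ^ (1 / p) * (∑ j, |m j| ^ p) ^ (1 / p)) := by
  have hp0 : 0 < p := by linarith
  have norm_zero : ∀ {α : Type} [Fintype α] (f : α → ℝ), ∑ i, |f i| ^ p = 0 → ∀ i, f i = 0 := by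
    intro α _ f hf i
    have := (Finset.sum_eq_zero_iff_of_nonneg (fun i _ => by positivity)).1 hf i
      (Finset.mem_univ i)
    rwa [Real.rpow_eq_zero (abs_nonneg _) hp0.ne', abs_eq_zero] at this
  have unit : ∀ {α : Type} [Fintype α] (f : α → ℝ), 0 < ∑ i, |f i| ^ p →
      ∑ i, |f i / (∑ i, |f i| ^ p) ^ (1 / p)| ^ p ≤ 1 := by
    intro α _ f hf
    have : ∀ i, |f i / (∑ i, |f i| ^ p) ^ (1 / p)| ^ p = |f i| ^ p / ∑ i, |f i| ^ p := by
      intro i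
      rw [abs_div, abs_of_nonneg (a := (_ : ℝ) ^ (1 / p)) (by positivity),
        Real.div_rpow (abs_nonneg _) (by positivity), ← Real.rpow_mul hf.le,
        one_div_mul_cancel hp0.ne', Real.rpow_one]
    simp only [this]
    rw [← Finset.sum_div, div_self hf.ne']
  rcases (show 0 ≤ ∑ i, |l i| ^ p by positivity).eq_or_lt with h | h
  · have h0 := norm_zero l h.symm
    simp only [h0, mul_zero, zero_mul, Finset.sum_const_zero, abs_zero]
    have := hb 0 0 (by simp) (by simp)
    have : 0 ≤ b := (abs_nonneg _).trans this
    positivity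
  rcases (show 0 ≤ ∑ i, |m i| ^ p by positivity).eq_or_lt with h' | h'
  · have h0 := norm_zero m h'.symm
    simp only [h0, mul_zero, Finset.sum_const_zero, abs_zero]
    have := hb 0 0 (by simp) (by simp)
    have : 0 ≤ b := (abs_nonneg _).trans this
    positivity
  have key := interp_unit hp1 hp2 c a b ha0 ha hb _ _ (unit l h) (unit m h')
  set L := (∑ i, |l i| ^ p) ^ (1 / p) with hL
  set M := (∑ i, |m i| ^ p) ^ (1 / p) with hM
  have hL0 : 0 < L := by positivity
  have hM0 : 0 < M := by positivity
  have e : ∑ i, ∑ j, c i j * l i * m j = (∑ i, ∑ j, c i j * (l i / L) * (m j / M)) * (L * M) := by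
    simp only [Finset.sum_mul]
    refine Finset.sum_congr rfl fun i _ => Finset.sum_congr rfl fun j _ => ?_
    field_simp
  rw [e, abs_mul, abs_of_pos (mul_pos hL0 hM0)]
  gcongr

/-! ### Coordinates and eigenvalues of self-adjoint matrices -/

/-- The real vector space of self-adjoint `n × n` complex matrices. -/
abbrev Herm (n : ℕ) := selfAdjoint (Matrix (Fin n) (Fin n) ℂ)

lemma herm_apply {n : ℕ} (A : Herm n) (j k : Fin n) :
    (A : Matrix (Fin n) (Fin n) ℂ) k j = star ((A : Matrix (Fin n) (Fin n) ℂ) j k) :=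
  ((Matrix.IsHermitian.ext_iff (A := (A : Matrix (Fin n) (Fin n) ℂ))).1 A.2 k j).symm

/-- The real coordinates `A ↦ Re A_{jk} + Im A_{jk}`. As `A_{kj}` is the conjugate of `A_{jk}`, the two
coordinates at `(j, k)` and `(k, j)` are `Re A_{jk} ± Im A_{jk}` and determine the entry; no case
distinction between diagonal and off-diagonal positions is needed. -/
noncomputable def coords (n : ℕ) : Herm n ≃ₗ[ℝ] (Idx n → ℝ) where
  toFun A a := ((A : Matrix (Fin n) (Fin n) ℂ) a.1 a.2).re
    + ((A : Matrix (Fin n) (Fin n) ℂ) a.1 a.2).im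
  map_add' A B := by
    ext a
    simp
    ring
  map_smul' r A := by
    ext a
    simp
    ring
  invFun u := ⟨fun j k => ⟨(u (j, k) + u (k, j)) / 2, (u (j, k) - u (k, j)) / 2⟩, by
    refine Matrix.IsHermitian.ext fun j k => ?_
    apply Complex.ext
    · simp; ring
    · simp; ring⟩
  left_inv A := by
    ext j k
    have h := herm_apply A j k
    have h1 := congrArg Complex.re h
    have h2 := congrArg Complex.im h
    simp only [Complex.star_def, Complex.conj_re, Complex.conj_im] at h1 h2
    apply Complex.ext
    · simp only [h1, h2]; ring
    · simp only [h1, h2]; ring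
  right_inv u := by
    ext a
    simp only [Prod.mk.eta]
    ring

lemma coords_apply {n : ℕ} (A : Herm n) (a : Idx n) :
    coords n A a = ((A : Matrix (Fin n) (Fin n) ℂ) a.1 a.2).re
      + ((A : Matrix (Fin n) (Fin n) ℂ) a.1 a.2).im := rfl

/-- The coordinates are isometric from the Hilbert–Schmidt norm to the Euclidean norm. -/
lemma sum_coords_sq {n : ℕ} (A : Herm n) :
    ∑ a, coords n A a ^ 2
      = ((A : Matrix (Fin n) (Fin n) ℂ) * (A : Matrix (Fin n) (Fin n) ℂ)).trace.re := by
  have h1 : ∑ a, coords n A a ^ 2 = ∑ a : Idx n, coords n A (a.2, a.1) ^ 2 :=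
    (Equiv.sum_comp (Equiv.prodComm _ _) (fun a => coords n A a ^ 2)).symm
  have h2 : ((A : Matrix (Fin n) (Fin n) ℂ) * (A : Matrix (Fin n) (Fin n) ℂ)).trace.re
      = ∑ a : Idx n, (coords n A a ^ 2 + coords n A (a.2, a.1) ^ 2) / 2 := by
    simp only [Matrix.trace, Matrix.diag, Matrix.mul_apply, Complex.re_sum, Fintype.sum_prod_type]
    refine Finset.sum_congr rfl fun j _ => Finset.sum_congr rfl fun k _ => ?_
    simp only [coords_apply, herm_apply A j k, Complex.star_def, Complex.conj_re, Complex.conj_im,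
      Complex.mul_re]
    ring
  rw [h2, ← Finset.sum_div, Finset.sum_add_distrib, ← h1]
  ring

/-- The orthogonal projection onto the line spanned by the `i`-th column of the unitary `U`. -/
noncomputable def proj {n : ℕ} (U : Matrix.unitaryGroup (Fin n) ℂ) (i : Fin n) : Herm n :=
  ⟨Matrix.of fun j k =>
    (U : Matrix (Fin n) (Fin n) ℂ) j i * star ((U : Matrix (Fin n) (Fin n) ℂ) k i), by
    refine Matrix.IsHermitian.ext fun j k => ?_
    simp [mul_comm]⟩

lemma coe_sum_proj {n : ℕ} (U : Matrix.unitaryGroup (Fin n) ℂ) (s : Fin n → ℝ) :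
    ((∑ i, s i • proj U i : Herm n) : Matrix (Fin n) (Fin n) ℂ)
      = U * Matrix.diagonal (fun i => (s i : ℂ)) * star (U : Matrix (Fin n) (Fin n) ℂ) := by
  ext j k
  rw [Matrix.mul_apply]
  simp only [AddSubgroup.val_finsetSum, Matrix.sum_apply, Matrix.mul_diagonal, Matrix.star_apply]
  refine Finset.sum_congr rfl fun i _ => ?_
  simp only [proj, selfAdjoint.val_smul, Matrix.smul_apply, Matrix.of_apply, Complex.real_smul]
  ring

lemma sum_coords_sum_proj_sq {n : ℕ} (U : Matrix.unitaryGroup (Fin n) ℂ) (s : Fin n → ℝ) :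
    ∑ a, coords n (∑ i, s i • proj U i) a ^ 2 = ∑ i, s i ^ 2 := by
  have hU : star (U : Matrix (Fin n) (Fin n) ℂ) * U = 1 := Unitary.coe_star_mul_self U
  rw [sum_coords_sq, coe_sum_proj]
  set D := Matrix.diagonal (fun i => (s i : ℂ))
  set V := (U : Matrix (Fin n) (Fin n) ℂ)
  have : V * D * star V * (V * D * star V) = V * (D * D) * star V := by
    calc _ = V * D * (star V * V) * D * star V := by simp only [Matrix.mul_assoc]
      _ = _ := by rw [hU]; simp only [Matrix.mul_assoc, Matrix.one_mul]
  rw [this, Matrix.trace_mul_comm, ← Matrix.mul_assoc, hU, Matrix.one_mul,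
    Matrix.diagonal_mul_diagonal, Matrix.trace_diagonal, Complex.re_sum]
  refine Finset.sum_congr rfl fun i _ => ?_
  simp [sq]

/-- The eigenvalues entering the definition of `schNorm`. -/
noncomputable def eigs {n : ℕ} (A : Herm n) : Fin n → ℝ :=
  Matrix.IsHermitian.eigenvalues (A.2 : (A : Matrix (Fin n) (Fin n) ℂ).IsHermitian)

/-- A unitary matrix whose columns are eigenvectors for the eigenvalues `eigs A`. -/
noncomputable def eigU {n : ℕ} (A : Herm n) : Matrix.unitaryGroup (Fin n) ℂ :=
  Matrix.IsHermitian.eigenvectorUnitary (A.2 : (A : Matrix (Fin n) (Fin n) ℂ).IsHermitian)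

lemma schNorm_eq (p : ℝ) {n : ℕ} (A : Herm n) :
    schNorm p A = (∑ i, |eigs A i| ^ p) ^ (1 / p) := rfl

lemma herm_eq {n : ℕ} (A : Herm n) : A = ∑ i, eigs A i • proj (eigU A) i := by
  apply Subtype.ext
  rw [coe_sum_proj]
  have h := Matrix.IsHermitian.spectral_theorem (A.2 : (A : Matrix (Fin n) (Fin n) ℂ).IsHermitian)
  rw [Unitary.conjStarAlgAut_apply] at h
  exact h

lemma sum_eigs_sq {n : ℕ} (A : Herm n) : ∑ a, coords n A a ^ 2 = ∑ i, eigs A i ^ 2 := by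
  conv_lhs => rw [herm_eq A]
  exact sum_coords_sum_proj_sq _ _

lemma schNorm_nonneg (p : ℝ) {n : ℕ} (A : Herm n) : 0 ≤ schNorm p A := by
  rw [schNorm_eq]; positivity

lemma abs_coords_le {p : ℝ} (hp : 1 < p) {n : ℕ} (A : Herm n) (a : Idx n) :
    |coords n A a| ≤ n * schNorm p A := by
  have hp0 : 0 < p := by linarith
  have h1 : ∀ i, |eigs A i| ≤ schNorm p A := by
    intro i
    rw [schNorm_eq]
    have h := Finset.single_le_sum (f := fun i => |eigs A i| ^ p) (fun i _ => by positivity)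
      (Finset.mem_univ i)
    calc |eigs A i| = (|eigs A i| ^ p) ^ (1 / p) := by
          rw [← Real.rpow_mul (abs_nonneg _), mul_one_div_cancel hp0.ne', Real.rpow_one]
      _ ≤ _ := by gcongr
  have hn : (1 : ℝ) ≤ n := by exact_mod_cast (Nat.succ_le_of_lt a.1.pos)
  have h0 := schNorm_nonneg p A
  refine abs_le_of_sq_le_sq ?_ (by positivity)
  calc coords n A a ^ 2 ≤ ∑ a, coords n A a ^ 2 :=
        Finset.single_le_sum (f := fun a => coords n A a ^ 2) (fun i _ => sq_nonneg _)
          (Finset.mem_univ a)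
    _ = ∑ i, eigs A i ^ 2 := sum_eigs_sq A
    _ ≤ ∑ _i : Fin n, schNorm p A ^ 2 := by
        refine Finset.sum_le_sum fun i _ => ?_
        rw [← sq_abs]
        gcongr
        exact h1 i
    _ = n * schNorm p A ^ 2 := by simp
    _ ≤ _ := by rw [mul_pow]; gcongr; nlinarith

/-- Hölder: `‖A‖_p ≤ n^{1/p - 1/2} ‖A‖_2`, the Hilbert–Schmidt norm being expressed in coordinates. -/
lemma schNorm_le {p : ℝ} (hp1 : 1 < p) (hp2 : p < 2) {n : ℕ} (A : Herm n) :
    schNorm p A ≤ (n : ℝ) ^ (1 / p - 1 / 2) * √(∑ a, coords n A a ^ 2) := by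
  have hp0 : 0 < p := by linarith
  have hq : 1 ≤ 2 / p := by rw [le_div_iff₀ hp0]; linarith
  have h := Real.rpow_sum_le_const_mul_sum_rpow_of_nonneg (s := Finset.univ)
    (f := fun i => |eigs A i| ^ p) hq (fun i _ => by positivity)
  rw [sum_eigs_sq, schNorm_eq]
  have e1 : ∀ i, (|eigs A i| ^ p) ^ (2 / p) = eigs A i ^ 2 := by
    intro i
    rw [← Real.rpow_mul (abs_nonneg _), mul_div_cancel₀ _ hp0.ne', Real.rpow_two, sq_abs]
  simp only [e1, Finset.card_univ, Fintype.card_fin] at h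
  have h2 := Real.sqrt_le_sqrt h
  rw [Real.sqrt_mul (by positivity), Real.sqrt_eq_rpow, Real.sqrt_eq_rpow,
    ← Real.rpow_mul (by positivity), ← Real.rpow_mul (by positivity)] at h2
  rw [Real.sqrt_eq_rpow] at h2 ⊢
  convert h2 using 2
  · ring
  · congr 1; ring

/-! ### Norm of the sign form on the Schatten class -/

/-- With `x = r + i s` a unit vector, the coordinate at `(j, k)` of the projection `x x*` is
`r_j r_k + s_j s_k + s_j r_k - r_j s_k`, a sum of four products of vectors of norm at most `1`. -/
lemma coords_proj {n : ℕ} (U : Matrix.unitaryGroup (Fin n) ℂ) (i : Fin n) :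
    ∃ X Y : Fin 4 → Fin n → ℝ, (∀ τ, ∑ j, X τ j ^ 2 ≤ 1) ∧ (∀ τ, ∑ j, Y τ j ^ 2 ≤ 1) ∧
      ∀ a, coords n (proj U i) a = ∑ τ, X τ a.1 * Y τ a.2 := by
  set r : Fin n → ℝ := fun j => ((U : Matrix (Fin n) (Fin n) ℂ) j i).re with hr
  set s : Fin n → ℝ := fun j => ((U : Matrix (Fin n) (Fin n) ℂ) j i).im with hs
  have h1 : ∑ j, (r j ^ 2 + s j ^ 2) = 1 := by
    have hU : star (U : Matrix (Fin n) (Fin n) ℂ) * U = 1 := Unitary.coe_star_mul_self U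
    have h := congrArg Complex.re (congrFun (congrFun hU i) i)
    rw [Matrix.mul_apply, Complex.re_sum, Matrix.one_apply_eq, Complex.one_re] at h
    rw [← h]
    refine Finset.sum_congr rfl fun j _ => ?_
    simp only [hr, hs, Matrix.star_apply, Complex.star_def, Complex.mul_re, Complex.conj_re,
      Complex.conj_im]
    ring
  rw [Finset.sum_add_distrib] at h1
  have h2 : 0 ≤ ∑ j, r j ^ 2 := Finset.sum_nonneg fun _ _ => sq_nonneg _
  have h3 : 0 ≤ ∑ j, s j ^ 2 := Finset.sum_nonneg fun _ _ => sq_nonneg _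
  refine ⟨![r, s, s, -r], ![r, s, r, s], ?_, ?_, ?_⟩
  · intro τ
    fin_cases τ <;> simp <;> linarith
  · intro τ
    fin_cases τ <;> simp <;> linarith
  · intro a
    rw [Fin.sum_univ_four]
    simp only [coords_apply, proj, Matrix.of_apply, Complex.star_def, Complex.mul_re,
      Complex.mul_im, Complex.conj_re, Complex.conj_im]
    simp [hr, hs]
    ring

/-- The form `W` has norm at most `2320 n^{3/2 - 1/p}` on `S_p × S_p`. With the eigenvectors of `A` and `B`
fixed, `W` becomes a bilinear form in the eigenvalues, with coefficients `W(P_k, Q_l)` for rank-one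
projections; the constant is `2320 = 4 · 4 · 145`. -/
lemma pairing_bound {p : ℝ} (hp1 : 1 < p) (hp2 : p < 2) {n : ℕ} (hn : 1 ≤ n)
    (ε : Idx n × Idx n → ℝ)
    (h4 : ∀ x x' y y' : Fin n → ℝ, ∑ i, x i ^ 2 ≤ 1 → ∑ i, x' i ^ 2 ≤ 1 → ∑ i, y i ^ 2 ≤ 1 →
        ∑ i, y' i ^ 2 ≤ 1 →
        ∑ i : Idx n × Idx n, ε i * (x i.1.1 * x' i.1.2 * (y i.2.1 * y' i.2.2)) ≤ 145 * √n)
    (h2 : ∀ u v : Idx n → ℝ, ∑ i, u i ^ 2 ≤ 1 → ∑ i, v i ^ 2 ≤ 1 →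
        ∑ i : Idx n × Idx n, ε i * (u i.1 * v i.2) ≤ 145 * n) (A B : Herm n) :
    |∑ i : Idx n × Idx n, ε i * (coords n A i.1 * coords n B i.2)|
      ≤ 2320 * (n : ℝ) ^ (3 / 2 - 1 / p) * (schNorm p A * schNorm p B) := by
  have hn0 : (0 : ℝ) < n := by exact_mod_cast hn
  have hp0 : 0 < p := by linarith
  set c : Fin n → Fin n → ℝ := fun k l => ∑ i : Idx n × Idx n,
    ε i * (coords n (proj (eigU A) k) i.1 * coords n (proj (eigU B) l) i.2) with hc
  have hexp : ∀ s t : Fin n → ℝ, ∑ k, ∑ l, c k l * s k * t l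
      = ∑ i : Idx n × Idx n, ε i * (coords n (∑ k, s k • proj (eigU A) k) i.1
        * coords n (∑ l, t l • proj (eigU B) l) i.2) := by
    intro s t
    simp only [hc, map_sum, map_smul, Finset.sum_apply, Pi.smul_apply, smul_eq_mul]
    simp only [Finset.sum_mul_sum]
    simp only [Finset.mul_sum, Finset.sum_mul]
    symm
    rw [Finset.sum_comm]
    refine Finset.sum_congr rfl fun k _ => ?_
    rw [Finset.sum_comm]
    refine Finset.sum_congr rfl fun l _ => Finset.sum_congr rfl fun i _ => ?_
    ring
  have hbound := interp hp1 hp2 c (2320 * √n) (145 * n) (by positivity) (by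
      intro k l
      obtain ⟨X, Y, hX, hY, hXY⟩ := coords_proj (eigU A) k
      obtain ⟨X', Y', hX', hY', hXY'⟩ := coords_proj (eigU B) l
      have e : c k l = ∑ τ, ∑ τ', ∑ i : Idx n × Idx n,
          ε i * (X τ i.1.1 * Y τ i.1.2 * (X' τ' i.2.1 * Y' τ' i.2.2)) := by
        simp only [hc, hXY, hXY']
        simp only [Finset.sum_mul_sum]
        simp only [Finset.mul_sum]
        rw [Finset.sum_comm]
        refine Finset.sum_congr rfl fun τ _ => ?_
        rw [Finset.sum_comm]
      have b : ∀ τ τ', |∑ i : Idx n × Idx n,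
          ε i * (X τ i.1.1 * Y τ i.1.2 * (X' τ' i.2.1 * Y' τ' i.2.2))| ≤ 145 * √n := by
        intro τ τ'
        refine abs_le'.2 ⟨h4 _ _ _ _ (hX τ) (hY τ) (hX' τ') (hY' τ'), ?_⟩
        have := h4 (-X τ) _ _ _ (by simpa using hX τ) (hY τ) (hX' τ') (hY' τ')
        simpa using this
      rw [e]
      calc |∑ τ, ∑ τ', ∑ i : Idx n × Idx n,
            ε i * (X τ i.1.1 * Y τ i.1.2 * (X' τ' i.2.1 * Y' τ' i.2.2))|
          ≤ ∑ _τ : Fin 4, ∑ _τ' : Fin 4, 145 * √n := by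
            refine (Finset.abs_sum_le_sum_abs _ _).trans (Finset.sum_le_sum fun τ _ => ?_)
            exact (Finset.abs_sum_le_sum_abs _ _).trans (Finset.sum_le_sum fun τ' _ => b τ τ')
        _ = 2320 * √n := by
            simp only [Finset.sum_const, Finset.card_univ, Fintype.card_fin, nsmul_eq_mul]
            norm_num
            ring)
    (by
      intro s t hs ht
      rw [hexp]
      have hs' : ∑ a, coords n (∑ k, s k • proj (eigU A) k) a ^ 2 ≤ 1 := by
        rwa [sum_coords_sum_proj_sq]
      have ht' : ∑ a, coords n (∑ l, t l • proj (eigU B) l) a ^ 2 ≤ 1 := by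
        rwa [sum_coords_sum_proj_sq]
      refine abs_le'.2 ⟨h2 _ _ hs' ht', ?_⟩
      have := h2 (-coords n (∑ k, s k • proj (eigU A) k)) _ (by simpa using hs') ht'
      simpa using this)
    (eigs A) (eigs B)
  rw [hexp, ← herm_eq, ← herm_eq, ← schNorm_eq, ← schNorm_eq] at hbound
  refine hbound.trans ?_
  have := schNorm_nonneg p A
  have := schNorm_nonneg p B
  refine mul_le_mul_of_nonneg_right ?_ (by positivity)
  have hq0 : 0 ≤ 2 - 2 / p := by
    rw [sub_nonneg, div_le_iff₀ hp0]; linarith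
  calc (2320 * √(n : ℝ)) ^ (2 / p - 1) * (4 * (145 * n)) ^ (2 - 2 / p)
      ≤ (2320 * √(n : ℝ)) ^ (2 / p - 1) * (2320 * (n : ℝ)) ^ (2 - 2 / p) := by
        exact mul_le_mul_of_nonneg_left
          (Real.rpow_le_rpow (by positivity) (by linarith) hq0) (by positivity)
    _ = (2320 ^ (2 / p - 1) * 2320 ^ (2 - 2 / p))
          * (((n : ℝ) ^ (1 / 2 : ℝ)) ^ (2 / p - 1) * (n : ℝ) ^ (2 - 2 / p)) := by
        rw [Real.mul_rpow (by norm_num) (by positivity), Real.mul_rpow (by norm_num) hn0.le,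
          Real.sqrt_eq_rpow]
        ring
    _ = 2320 * (n : ℝ) ^ (3 / 2 - 1 / p) := by
        rw [← Real.rpow_add (by norm_num), ← Real.rpow_mul hn0.le, ← Real.rpow_add hn0]
        congr 1
        · ring_nf; norm_num
        · congr 1; ring

open TensorProduct

/-! ### Tensor norms: expansion in a basis and finiteness -/

/-- The coordinate at position `a` as a linear functional. -/
noncomputable def coordL {n : ℕ} (a : Idx n) : Herm n →ₗ[ℝ] ℝ :=
  LinearMap.proj a ∘ₗ (coords n).toLinearMap

lemma coordL_apply {n : ℕ} (a : Idx n) (A : Herm n) : coordL a A = coords n A a := rfl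

/-- The basis dual to the coordinates `coordL`. -/
noncomputable def bas {n : ℕ} (a : Idx n) : Herm n := (coords n).symm (Pi.single a 1)

lemma coords_bas {n : ℕ} (a b : Idx n) : coords n (bas a) b = if b = a then 1 else 0 := by
  rw [bas, LinearEquiv.apply_symm_apply, Pi.single_apply]

lemma coords_sum_bas {n : ℕ} (u : Idx n → ℝ) : coords n (∑ a, u a • bas a) = u := by
  ext b
  simp [coords_bas]

lemma sum_coords_bas {n : ℕ} (A : Herm n) : ∑ a, coords n A a • bas a = A :=
  (coords n).injective (coords_sum_bas _)

/-- The functional `φ ⊗ ψ` on the tensor product. -/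
noncomputable def tfun {n : ℕ} (φ ψ : Herm n →ₗ[ℝ] ℝ) : Herm n ⊗[ℝ] Herm n →ₗ[ℝ] ℝ :=
  (TensorProduct.lid ℝ ℝ).toLinearMap ∘ₗ TensorProduct.map φ ψ

lemma tfun_tmul {n : ℕ} (φ ψ : Herm n →ₗ[ℝ] ℝ) (A B : Herm n) :
    tfun φ ψ (A ⊗ₜ B) = φ A * ψ B := by
  simp [tfun]

lemma tensor_expand {n : ℕ} (z : Herm n ⊗[ℝ] Herm n) :
    z = ∑ i : Idx n × Idx n, (tfun (coordL i.1) (coordL i.2) z • bas i.1) ⊗ₜ[ℝ] bas i.2 := by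
  induction z with
  | zero => simp
  | add x y hx hy =>
    simp only [map_add, add_smul, TensorProduct.add_tmul, Finset.sum_add_distrib]
    rw [← hx, ← hy]
  | tmul A B =>
    conv_lhs => rw [← sum_coords_bas A, ← sum_coords_bas B, TensorProduct.sum_tmul]
    simp only [TensorProduct.tmul_sum]
    conv_rhs => rw [Fintype.sum_prod_type]
    refine Finset.sum_congr rfl fun a _ => ?_
    refine Finset.sum_congr rfl fun b _ => ?_
    rw [tfun_tmul, coordL_apply, coordL_apply, TensorProduct.smul_tmul_smul]
    rfl

/-- The supremum defining `injSch` is over a bounded set, so it is a genuine supremum. -/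
lemma injSch_bdd (p : ℝ) {n : ℕ} (z : Herm n ⊗[ℝ] Herm n) :
    BddAbove { r : ℝ | ∃ (φ ψ : Herm n →ₗ[ℝ] ℝ),
      (∀ x, |φ x| ≤ schNorm p x) ∧ (∀ y, |ψ y| ≤ schNorm p y) ∧
      r = |TensorProduct.lid ℝ ℝ (TensorProduct.map φ ψ z)| } := by
  refine ⟨∑ i : Idx n × Idx n, schNorm p (tfun (coordL i.1) (coordL i.2) z • bas i.1)
    * schNorm p (bas i.2), ?_⟩
  rintro _ ⟨φ, ψ, hφ, hψ, rfl⟩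
  change |tfun φ ψ z| ≤ _
  conv_lhs => rw [tensor_expand z]
  rw [map_sum]
  refine (Finset.abs_sum_le_sum_abs _ _).trans (Finset.sum_le_sum fun i _ => ?_)
  rw [tfun_tmul, abs_mul]
  exact mul_le_mul (hφ _) (hψ _) (abs_nonneg _) (schNorm_nonneg _ _)

lemma projSch_le {p : ℝ} {n : ℕ} {ι : Type} [Fintype ι] (a b : ι → Herm n) :
    projSch p (∑ i, a i ⊗ₜ[ℝ] b i) ≤ ∑ i, schNorm p (a i) * schNorm p (b i) := by
  refine csInf_le ⟨0, ?_⟩ ⟨Fintype.card ι, fun k => a ((Fintype.equivFin ι).symm k),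
    fun k => b ((Fintype.equivFin ι).symm k), ?_, ?_⟩
  · rintro _ ⟨k, a, b, -, rfl⟩
    exact Finset.sum_nonneg fun i _ => mul_nonneg (schNorm_nonneg _ _) (schNorm_nonneg _ _)
  · exact (Equiv.sum_comp (Fintype.equivFin ι).symm fun i => a i ⊗ₜ[ℝ] b i).symm
  · exact (Equiv.sum_comp (Fintype.equivFin ι).symm
      fun i => schNorm p (a i) * schNorm p (b i)).symm

/-- Trace duality: a bilinear form of norm at most `K` gives a lower bound for the projective norm. The
basis expansion of `z` shows that the infimum is not over the empty set. -/
lemma le_projSch {p : ℝ} {n : ℕ} (W : Herm n ⊗[ℝ] Herm n →ₗ[ℝ] ℝ) (K : ℝ) (hK : 0 < K)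
    (hW : ∀ A B : Herm n, W (A ⊗ₜ B) ≤ K * (schNorm p A * schNorm p B))
    (z : Herm n ⊗[ℝ] Herm n) : W z / K ≤ projSch p z := by
  refine le_csInf ?_ ?_
  · refine ⟨_, Fintype.card (Idx n × Idx n),
      fun k => tfun (coordL ((Fintype.equivFin (Idx n × Idx n)).symm k).1)
        (coordL ((Fintype.equivFin (Idx n × Idx n)).symm k).2) z
          • bas ((Fintype.equivFin (Idx n × Idx n)).symm k).1,
      fun k => bas ((Fintype.equivFin (Idx n × Idx n)).symm k).2, ?_, rfl⟩
    conv_lhs => rw [tensor_expand z]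
    exact (Equiv.sum_comp (Fintype.equivFin (Idx n × Idx n)).symm fun i =>
      (tfun (coordL i.1) (coordL i.2) z • bas i.1) ⊗ₜ[ℝ] bas i.2).symm
  · rintro _ ⟨k, a, b, rfl, rfl⟩
    rw [div_le_iff₀ hK, map_sum, Finset.sum_mul]
    exact Finset.sum_le_sum fun i _ => (hW _ _).trans_eq (mul_comm _ _)

/-- The supremum defining `rhoSch` is over a bounded set: the functionals `n⁻¹ • coordL a` lie in the dual
unit ball, so the coefficients of a tensor of injective norm at most `1` are at most `n²`. -/
lemma rhoSch_bdd {p : ℝ} (hp1 : 1 < p) (hp2 : p < 2) {n : ℕ} (hn : 1 ≤ n) :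
    BddAbove { r : ℝ | ∃ z : Herm n ⊗[ℝ] Herm n, injSch p z ≤ 1 ∧ r = projSch p z } := by
  have hn0 : (0 : ℝ) < n := by exact_mod_cast hn
  set D : ℝ := (n : ℝ) ^ (1 / p - 1 / 2)
  refine ⟨∑ i : Idx n × Idx n, (D * n ^ 2) * schNorm p (bas i.2), ?_⟩
  rintro _ ⟨z, hz, rfl⟩
  conv_lhs => rw [tensor_expand z]
  refine (projSch_le _ _).trans (Finset.sum_le_sum fun i _ => ?_)
  refine mul_le_mul_of_nonneg_right ?_ (schNorm_nonneg _ _)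
  have hco : |tfun (coordL i.1) (coordL i.2) z| ≤ n ^ 2 := by
    have hφ : ∀ (a : Idx n) (x : Herm n), |((n : ℝ)⁻¹ • coordL a) x| ≤ schNorm p x := by
      intro a x
      rw [LinearMap.smul_apply, smul_eq_mul, abs_mul, abs_of_pos (inv_pos.2 hn0),
        inv_mul_le_iff₀ hn0]
      exact abs_coords_le hp1 x a
    have h := (le_csSup (injSch_bdd p z) ⟨_, _, hφ i.1, hφ i.2, rfl⟩).trans hz
    have e : TensorProduct.lid ℝ ℝ (TensorProduct.map ((n : ℝ)⁻¹ • coordL i.1)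
        ((n : ℝ)⁻¹ • coordL i.2) z) = ((n : ℝ) ^ 2)⁻¹ * tfun (coordL i.1) (coordL i.2) z := by
      rw [TensorProduct.map_smul_left, TensorProduct.map_smul_right]
      simp only [LinearMap.smul_apply, map_smul, smul_eq_mul, tfun, LinearMap.comp_apply,
        LinearEquiv.coe_coe]
      ring
    rw [e, abs_mul, abs_of_pos (by positivity), inv_mul_le_iff₀ (by positivity), mul_one] at h
    exact h
  refine (schNorm_le hp1 hp2 _).trans ?_
  gcongr
  refine le_trans (le_of_eq ?_) hco
  rw [← Real.sqrt_sq_eq_abs]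
  congr 1
  simp [coords_bas]

/-- Dual form of `schNorm_le`: a functional in the dual unit ball of `S_p` has Euclidean norm at most
`n^{1/p - 1/2}`. -/
lemma sum_functional_sq_le {p : ℝ} (hp1 : 1 < p) (hp2 : p < 2) {n : ℕ}
    (φ : Herm n →ₗ[ℝ] ℝ) (hφ : ∀ x, |φ x| ≤ schNorm p x) :
    √(∑ a, φ (bas a) ^ 2) ≤ (n : ℝ) ^ (1 / p - 1 / 2) := by
  set S := ∑ a, φ (bas a) ^ 2 with hS
  have h0 : 0 ≤ S := Finset.sum_nonneg fun _ _ => sq_nonneg _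
  have h1 : S ≤ (n : ℝ) ^ (1 / p - 1 / 2) * √S := by
    calc S = φ (∑ a, φ (bas a) • bas a) := by
          rw [map_sum]
          exact Finset.sum_congr rfl fun a _ => by rw [map_smul, smul_eq_mul, sq]
      _ ≤ schNorm p (∑ a, φ (bas a) • bas a) := (le_abs_self _).trans (hφ _)
      _ ≤ _ := by
          refine (schNorm_le hp1 hp2 _).trans_eq ?_
          rw [coords_sum_bas]
  rcases h0.eq_or_lt with h | h
  · rw [← h, Real.sqrt_zero]; positivity
  · have h2 : 0 < √S := Real.sqrt_pos.2 h
    refine le_of_mul_le_mul_right ?_ h2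
    rwa [Real.mul_self_sqrt h0]

/-! ### The lower bound -/

/-- For `1 < p < 2` there is `C > 0`, independent of `n`, with
`ρ(S_p^{n,sa}, S_p^{n,sa}) ≥ C·n^{5/2 − 1/p}`. -/
theorem statement13 (p : ℝ) (hp1 : 1 < p) (hp2 : p < 2) :
    ∃ C > (0:ℝ), ∀ n : ℕ, 1 ≤ n →
      C * (n : ℝ) ^ (5/2 - 1/p) ≤ rhoSch p n := by
  refine ⟨1 / (145 * 2320), by norm_num, fun n hn => ?_⟩
  have hn0 : (0 : ℝ) < n := by exact_mod_cast hn
  obtain ⟨ε, h1, h4, h2⟩ := exists_tensor n hn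
  set D : ℝ := (n : ℝ) ^ (1 / p - 1 / 2) with hD
  have hD0 : 0 < D := by positivity
  set W : Herm n ⊗[ℝ] Herm n →ₗ[ℝ] ℝ :=
    ∑ i : Idx n × Idx n, ε i • tfun (coordL i.1) (coordL i.2) with hWdef
  have hW : ∀ A B : Herm n, W (A ⊗ₜ B)
      = ∑ i : Idx n × Idx n, ε i * (coords n A i.1 * coords n B i.2) := by
    intro A B
    simp only [hWdef, LinearMap.sum_apply, LinearMap.smul_apply, tfun_tmul, coordL_apply,
      smul_eq_mul]
  set z₀ : Herm n ⊗[ℝ] Herm n := ∑ i : Idx n × Idx n, ε i • (bas i.1 ⊗ₜ[ℝ] bas i.2) with hz₀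
  have hWz : W z₀ = (n : ℝ) ^ 4 := by
    have : ∀ i : Idx n × Idx n, W (bas i.1 ⊗ₜ[ℝ] bas i.2) = ε i := by
      intro i
      rw [hW, Finset.sum_eq_single i]
      · simp [coords_bas]
      · intro j _ hj
        simp only [coords_bas]
        by_cases h : j.1 = i.1
        · have h' : j.2 ≠ i.2 := fun h' => hj (Prod.ext h h')
          simp [h']
        · simp [h]
      · simp
    rw [hz₀, map_sum]
    simp only [map_smul, this, smul_eq_mul, ← sq, h1]
    simp
    ring
  -- `145 n D²` bounds the injective norm of `z₀`.
  set z := (145 * n * D ^ 2)⁻¹ • z₀ with hz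
  have hinj : injSch p z ≤ 1 := by
    refine Real.sSup_le ?_ zero_le_one
    rintro _ ⟨φ, ψ, hφ, hψ, rfl⟩
    change |tfun φ ψ z| ≤ 1
    rw [hz, map_smul, smul_eq_mul, abs_mul, abs_of_pos (by positivity),
      inv_mul_le_iff₀ (by positivity), mul_one]
    have hu : ∀ χ : Herm n →ₗ[ℝ] ℝ, (∀ x, |χ x| ≤ schNorm p x) →
        ∑ a, (χ (bas a) / D) ^ 2 ≤ 1 := by
      intro χ hχ
      have := (Real.sqrt_le_left hD0.le).1 (sum_functional_sq_le hp1 hp2 χ hχ)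
      simp only [div_pow]
      rw [← Finset.sum_div, div_le_one (by positivity)]
      exact this
    have e : tfun φ ψ z₀ = D ^ 2 * ∑ i : Idx n × Idx n,
        ε i * (φ (bas i.1) / D * (ψ (bas i.2) / D)) := by
      rw [hz₀, map_sum, Finset.mul_sum]
      refine Finset.sum_congr rfl fun i _ => ?_
      rw [map_smul, smul_eq_mul, tfun_tmul]
      field_simp
    rw [e, abs_mul, abs_of_pos (by positivity), mul_comm]
    refine mul_le_mul_of_nonneg_right (abs_le'.2 ⟨?_, ?_⟩) (by positivity)
    · exact h2 (fun a => φ (bas a) / D) (fun a => ψ (bas a) / D) (hu φ hφ) (hu ψ hψ)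
    · have := h2 (fun a => -(φ (bas a) / D)) (fun a => ψ (bas a) / D)
        (by simpa using hu φ hφ) (hu ψ hψ)
      simpa using this
  have hproj := le_projSch (p := p) W (2320 * (n : ℝ) ^ (3 / 2 - 1 / p)) (by positivity)
    (fun A B => by
      rw [hW]
      exact (le_abs_self _).trans (pairing_bound hp1 hp2 hn ε h4 h2 A B)) z
  refine le_trans (le_of_eq ?_) (hproj.trans (le_csSup (rhoSch_bdd hp1 hp2 hn) ⟨z, hinj, rfl⟩))
  rw [hz, map_smul, hWz, smul_eq_mul]
  have e1 : (n : ℝ) ^ 4 = (n : ℝ) ^ (5 / 2 - 1 / p)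
      * (n * D ^ 2 * (n : ℝ) ^ (3 / 2 - 1 / p)) := by
    rw [hD, ← Real.rpow_natCast ((n : ℝ) ^ (1 / p - 1 / 2)) 2, ← Real.rpow_mul hn0.le]
    nth_rewrite 3 [← Real.rpow_one (n : ℝ)]
    rw [← Real.rpow_add hn0, ← Real.rpow_add hn0, ← Real.rpow_add hn0, ← Real.rpow_natCast]
    congr 1
    push_cast
    ring
  rw [e1]
  have : 0 < (n : ℝ) ^ (3 / 2 - 1 / p) := by positivity
  field_simp
end
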